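/- arXiv:cs/0602012 — 6 statements merged into one kernel-verified Lean document; each statement's English description precedes it below -/
import Mathlib

section
/- Let p be a prime, let g : ℤ_p → ℤ_p be a compatible map, and let c ∈ ℤ_p be a unit (i.e., c is not divisible by p). Then the map z ↦ c + z + p·(g(z+1) − g(z)) is compatible and ergodic, and for every d ∈ ℤ_p the map z ↦ d + c·z + p·g(z) is compatible and measure-preserving. -/
namespace Paper

/-- A sequence is purely periodic with period length `t`. -/
def PurePeriodic {α : Type*} (s : ℕ → α) (t : ℕ) : Prop :=
  ∀ i, s (i + t) = s i

/-- `t` is the length of the shortest period of the sequence `s`. -/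
def ShortestPeriod {α : Type*} (s : ℕ → α) (t : ℕ) : Prop :=
  1 ≤ t ∧ PurePeriodic s t ∧ ∀ t', 1 ≤ t' → PurePeriodic s t' → t ≤ t'

/-- A map `f : ℤ_[p] → ℤ_[p]` is compatible if `x ≡ y (mod p^n)` implies
`f x ≡ f y (mod p^n)` for all `n ≥ 1`. -/
def Compatible (p : ℕ) [Fact p.Prime] (f : ℤ_[p] → ℤ_[p]) : Prop :=
  ∀ n : ℕ, 1 ≤ n → ∀ x y : ℤ_[p],
    PadicInt.toZModPow n x = PadicInt.toZModPow n y →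
    PadicInt.toZModPow n (f x) = PadicInt.toZModPow n (f y)

/-- A map `f : ℤ_[p] → ℤ_[p]` is measure-preserving if the induced map modulo `p^n`
is bijective for every `n ≥ 1`. -/
def MeasurePreserving (p : ℕ) [Fact p.Prime] (f : ℤ_[p] → ℤ_[p]) : Prop :=
  ∀ n : ℕ, 1 ≤ n → ∃ fn : ZMod (p ^ n) → ZMod (p ^ n),
    (∀ x, fn (PadicInt.toZModPow n x) = PadicInt.toZModPow n (f x)) ∧
    Function.Bijective fn

/-- A map `f : ℤ_[p] → ℤ_[p]` is ergodic if the induced map modulo `p^n` is a permutation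
consisting of a single cycle of length `p^n` (i.e. it is bijective and iteration of it
reaches every point from every point), for every `n ≥ 1`. -/
def Ergodic (p : ℕ) [Fact p.Prime] (f : ℤ_[p] → ℤ_[p]) : Prop :=
  ∀ n : ℕ, 1 ≤ n → ∃ fn : ZMod (p ^ n) → ZMod (p ^ n),
    (∀ x, fn (PadicInt.toZModPow n x) = PadicInt.toZModPow n (f x)) ∧
    Function.Bijective fn ∧ ∀ a b : ZMod (p ^ n), ∃ k : ℕ, fn^[k] a = b

/-- `digit j x` is the `j`-th binary digit of the 2-adic integer `x`, as an element of `ZMod 2`. -/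
noncomputable def digit (j : ℕ) (x : ℤ_[2]) : ZMod 2 :=
  (((PadicInt.toZModPow (j + 1) x).val / 2 ^ j) % 2 : ℕ)

/-- `digitZ j x` is the `j`-th binary digit of the canonical representative of `x : ZMod N`. -/
def digitZ {N : ℕ} (j : ℕ) (x : ZMod N) : ZMod 2 :=
  ((x.val / 2 ^ j) % 2 : ℕ)

/-- The conditions of Theorem `thm:WP` on the family `g 0, …, g (m-1)`:
(1) the sequence `(g (i % m) 0 mod 2)` is purely periodic with shortest period length `m`;
(2) `∑ i < m, g i 0 ≡ 1 (mod 2)`;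
(3) for every `k ≥ 1`, `∑ j < m, ∑ z < 2^k, g j z ≡ 2^k (mod 2^(k+1))`. -/
def WP (m : ℕ) (g : ℕ → ℤ_[2] → ℤ_[2]) : Prop :=
  ShortestPeriod (fun i => PadicInt.toZModPow 1 (g (i % m) 0)) m ∧
  PadicInt.toZModPow 1 (∑ i ∈ Finset.range m, g i 0) = 1 ∧
  ∀ k : ℕ, 1 ≤ k →
    PadicInt.toZModPow (k + 1)
        (∑ j ∈ Finset.range m, ∑ z ∈ Finset.range (2 ^ k), g j (z : ℤ_[2])) =
      (2 ^ k : ZMod (2 ^ (k + 1)))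

/-- `L` is the length of some LFSR over `𝔽₂` producing the binary sequence `u`:
there are `c₁, …, c_L` with `u (i+L) = c₁ * u (i+L-1) + ⋯ + c_L * u i` for all `i`. -/
def IsLFSR (u : ℕ → ZMod 2) (L : ℕ) : Prop :=
  ∃ c : Fin L → ZMod 2, ∀ i : ℕ, u (i + L) = ∑ t : Fin L, c t * u (i + L - 1 - t.val)

/-- The linear complexity over `𝔽₂` of a binary sequence: the least length of an LFSR
producing it. -/
noncomputable def linComplexity (u : ℕ → ZMod 2) : ℕ := sInf {L | IsLFSR u L}

/-- A map `f : ℕ → ℕ` is compatible if `u ≡ w (mod 2^r)` implies `f u ≡ f w (mod 2^r)`. -/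
def NatCompatible (f : ℕ → ℕ) : Prop :=
  ∀ r : ℕ, 1 ≤ r → ∀ u w : ℕ, u % 2 ^ r = w % 2 ^ r → f u % 2 ^ r = f w % 2 ^ r

/-- A map `f : ℕ → ℕ` is ergodic if the induced map on `ZMod (2^n)` is a permutation
consisting of a single cycle of length `2^n`, for every `n ≥ 1`. -/
def NatErgodic (f : ℕ → ℕ) : Prop :=
  ∀ n : ℕ, 1 ≤ n → ∃ fn : ZMod (2 ^ n) → ZMod (2 ^ n),
    (∀ u : ℕ, fn (u : ZMod (2 ^ n)) = (f u : ZMod (2 ^ n))) ∧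
    Function.Bijective fn ∧ ∀ a b : ZMod (2 ^ n), ∃ k : ℕ, fn^[k] a = b

end Paper

/-!
Write `Δ g z = g (z + 1) - g z`. If `z ↦ c + z + p * Δ g z` is transitive modulo `p ^ n`, an orbit
segment of length `p ^ n` meets every residue class exactly once, so the values of `Δ g` along it
sum to `0` modulo `p ^ n`, the two sums of values of `g` being rearrangements of each other. Hence
`p ^ n` steps amount, modulo `p ^ (n + 1)`, to translation by `p ^ n * c`. As `c` is a unit, this
translation permutes cyclically the `p` lifts of each residue class, and transitivity lifts from
`p ^ n` to `p ^ (n + 1)`. For `z ↦ d + c * z + p * g z`, the term `p * g z` is constant modulo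
`p ^ (n + 1)` on classes modulo `p ^ n`, so injectivity lifts in the same way.
-/

namespace Paper

open Function PadicInt
open scoped fwdDiff

theorem surjective_of_forall_exists_iterate {α : Type*} {f : α → α}
    (h : ∀ a b, ∃ k : ℕ, f^[k] a = b) : Surjective f := by
  intro b
  obtain ⟨k, hk⟩ := h (f b) b
  exact ⟨f^[k] b, by rw [← iterate_succ_apply' f k b, iterate_succ_apply, hk]⟩

theorem iterate_eq_add_sum_sub {G : Type*} [AddCommGroup G] (f : G → G) (k : ℕ) (z : G) :
    f^[k] z = z + ∑ i ∈ Finset.range k, (f (f^[i] z) - f^[i] z) := by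
  simp only [← iterate_succ_apply' f, Finset.sum_range_sub (fun i ↦ f^[i] z), iterate_zero_apply,
    add_sub_cancel]

section Padic

variable {p : ℕ} [Fact p.Prime] {f g h : ℤ_[p] → ℤ_[p]} {c : ℤ_[p]} {n : ℕ}

theorem toZModPow_surjective (n : ℕ) : Surjective (toZModPow n : ℤ_[p] →+* ZMod (p ^ n)) :=
  ZMod.ringHom_surjective _

theorem toZModPow_eq_iff_pow_dvd_sub {x y : ℤ_[p]} :
    toZModPow n x = toZModPow n y ↔ (p : ℤ_[p]) ^ n ∣ x - y := by
  rw [← RingHom.sub_mem_ker_iff, ker_toZModPow, Ideal.mem_span_singleton]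

theorem exists_lt_dvd_sub_natCast_mul (hc : IsUnit c) (t : ℤ_[p]) :
    ∃ j < p, (p : ℤ_[p]) ∣ t - j * c := by
  obtain ⟨b, hb⟩ := hc.exists_left_inv
  obtain ⟨j, hj, hmem⟩ := exists_mem_range (t * b)
  rw [maximalIdeal_eq_span_p, Ideal.mem_span_singleton] at hmem
  refine ⟨j, hj, ?_⟩
  have hsub : t - j * c = (t * b - j) * c := by linear_combination -t * hb
  exact hsub ▸ hmem.mul_right c

theorem Compatible.toZModPow_eq (hf : Compatible p f) {x y : ℤ_[p]}
    (hxy : toZModPow n x = toZModPow n y) : toZModPow n (f x) = toZModPow n (f y) := by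
  obtain rfl | hn := n.eq_zero_or_pos
  · exact toZModPow_eq_iff_pow_dvd_sub.2 (by simp)
  · exact hf n hn x y hxy

theorem compatible_id : Compatible p fun z ↦ z :=
  fun _ _ _ _ hxy ↦ hxy

theorem compatible_const (c : ℤ_[p]) : Compatible p fun _ ↦ c :=
  fun _ _ _ _ _ ↦ rfl

theorem Compatible.add (hf : Compatible p f) (hg : Compatible p g) :
    Compatible p fun z ↦ f z + g z :=
  fun n hn x y hxy ↦ by simp only [map_add, hf n hn x y hxy, hg n hn x y hxy]

theorem Compatible.const_mul (c : ℤ_[p]) (hf : Compatible p f) : Compatible p fun z ↦ c * f z :=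
  fun n hn x y hxy ↦ by simp only [map_mul, hf n hn x y hxy]

protected theorem Compatible.fwdDiff (a : ℤ_[p]) (hf : Compatible p f) :
    Compatible p (Δ_[a] f) := by
  intro n hn x y hxy
  have hshift : toZModPow n (x + a) = toZModPow n (y + a) := by simp only [map_add, hxy]
  simp only [fwdDiff, map_sub, hf n hn x y hxy, hf n hn _ _ hshift]

/-- The map on `ZMod (p ^ n)` induced by a compatible map `f`, computed on arbitrary
representatives; for other maps `f` it depends on the choice of these. -/
noncomputable def residueMap (f : ℤ_[p] → ℤ_[p]) (n : ℕ) (a : ZMod (p ^ n)) : ZMod (p ^ n) :=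
  toZModPow n (f (surjInv (toZModPow_surjective n) a))

theorem Compatible.semiconj_residueMap (hf : Compatible p f) (n : ℕ) :
    Semiconj (toZModPow n) f (residueMap f n) :=
  fun _ ↦ hf.toZModPow_eq (surjInv_eq (toZModPow_surjective n) _).symm

theorem Compatible.sum_residueMap_fwdDiff (hg : Compatible p g) (a : ℤ_[p]) (n : ℕ) :
    ∑ x, residueMap (Δ_[a] g) n x = 0 := by
  have hdiff (x : ZMod (p ^ n)) : residueMap (Δ_[a] g) n x =
      residueMap g n (x + toZModPow n a) - residueMap g n x := by
    obtain ⟨z, rfl⟩ := toZModPow_surjective n x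
    rw [← map_add, ← (hg.fwdDiff a).semiconj_residueMap n, ← hg.semiconj_residueMap n,
      ← hg.semiconj_residueMap n, ← map_sub, fwdDiff]
  simp only [hdiff, Finset.sum_sub_distrib]
  exact sub_eq_zero.2 (Equiv.sum_comp (Equiv.addRight (toZModPow n a)) (residueMap g n))

theorem Compatible.measurePreserving_of_pow_dvd_sub (hf : Compatible p f)
    (hinj : ∀ n x y, (p : ℤ_[p]) ^ n ∣ f x - f y → (p : ℤ_[p]) ^ n ∣ x - y) :
    MeasurePreserving p f := by
  refine fun n _ ↦ ⟨residueMap f n, fun x ↦ (hf.semiconj_residueMap n x).symm,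
    Injective.bijective_of_finite fun a b hab ↦ ?_⟩
  obtain ⟨x, rfl⟩ := toZModPow_surjective n a
  obtain ⟨y, rfl⟩ := toZModPow_surjective n b
  rw [← hf.semiconj_residueMap n x, ← hf.semiconj_residueMap n y,
    toZModPow_eq_iff_pow_dvd_sub] at hab
  exact toZModPow_eq_iff_pow_dvd_sub.2 (hinj n x y hab)

theorem Compatible.pow_dvd_sub_of_pow_dvd_affine_add_sub (hg : Compatible p g) (hc : IsUnit c)
    (d : ℤ_[p]) (n : ℕ) (x y : ℤ_[p])
    (hxy : (p : ℤ_[p]) ^ n ∣ (d + c * x + p * g x) - (d + c * y + p * g y)) :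
    (p : ℤ_[p]) ^ n ∣ x - y := by
  induction n with
  | zero => simp
  | succ n ih =>
    have hdvd : (p : ℤ_[p]) ^ n ∣ x - y := ih ((pow_dvd_pow _ n.le_succ).trans hxy)
    have hg_dvd : (p : ℤ_[p]) ^ n ∣ g x - g y :=
      toZModPow_eq_iff_pow_dvd_sub.1 (hg.toZModPow_eq (toZModPow_eq_iff_pow_dvd_sub.2 hdvd))
    have hpg_dvd : (p : ℤ_[p]) ^ (n + 1) ∣ p * (g x - g y) :=
      pow_succ' (p : ℤ_[p]) n ▸ mul_dvd_mul_left _ hg_dvd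
    rw [← hc.dvd_mul_left]
    convert dvd_sub hxy hpg_dvd using 1
    ring

/-- Transitivity of `f` modulo `p ^ n`: every orbit visits every residue class within its first
`p ^ n` points. -/
def TransitiveMod (f : ℤ_[p] → ℤ_[p]) (n : ℕ) : Prop :=
  ∀ z, Surjective fun k : Fin (p ^ n) ↦ toZModPow n (f^[k] z)

theorem transitiveMod_zero (f : ℤ_[p] → ℤ_[p]) : TransitiveMod f 0 :=
  fun _ _ ↦ ⟨⟨0, by simp⟩, Subsingleton.elim (α := ZMod 1) _ _⟩

theorem Compatible.ergodic_of_forall_transitiveMod (hf : Compatible p f)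
    (htrans : ∀ n, TransitiveMod f n) : Ergodic p f := by
  intro n _
  have hreach (a b : ZMod (p ^ n)) : ∃ k : ℕ, (residueMap f n)^[k] a = b := by
    obtain ⟨z, rfl⟩ := toZModPow_surjective n a
    obtain ⟨k, hk⟩ := htrans n z b
    exact ⟨k, ((hf.semiconj_residueMap n).iterate_right k z).symm.trans hk⟩
  exact ⟨residueMap f n, fun x ↦ (hf.semiconj_residueMap n x).symm,
    (surjective_of_forall_exists_iterate hreach).bijective_of_finite, hreach⟩

theorem TransitiveMod.toZModPow_sum_iterate (hf : TransitiveMod f n) (hh : Compatible p h)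
    (z : ℤ_[p]) :
    toZModPow n (∑ k ∈ Finset.range (p ^ n), h (f^[k] z)) = ∑ a, residueMap h n a := by
  have hbij : Bijective fun k : Fin (p ^ n) ↦ toZModPow n (f^[k] z) :=
    (hf z).bijective_of_nat_card_le (by simp)
  simp only [map_sum, (hh.semiconj_residueMap n).eq]
  rw [Finset.sum_range, hbij.sum_comp (residueMap h n)]

theorem TransitiveMod.iterate_pow_semiconj_add (hh : Compatible p h)
    (hsum : ∑ a, residueMap h n a = 0) (htrans : TransitiveMod (fun z ↦ c + z + p * h z) n) :
    Semiconj (toZModPow (n + 1)) (fun z ↦ c + z + p * h z)^[p ^ n]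
      (· + toZModPow (n + 1) ((p : ℤ_[p]) ^ n * c)) := by
  intro z
  set f : ℤ_[p] → ℤ_[p] := fun z ↦ c + z + p * h z with hf
  have hiter : f^[p ^ n] z = z + p ^ n * c + p * ∑ k ∈ Finset.range (p ^ n), h (f^[k] z) := by
    have hstep (w : ℤ_[p]) : f w - w = c + p * h w := by simp only [hf]; ring
    rw [iterate_eq_add_sum_sub]
    simp only [hstep, Finset.sum_add_distrib, Finset.sum_const, Finset.card_range, nsmul_eq_mul,
      Nat.cast_pow, ← Finset.mul_sum, add_assoc]
  have hdvd : (p : ℤ_[p]) ^ n ∣ ∑ k ∈ Finset.range (p ^ n), h (f^[k] z) := by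
    have hzero := htrans.toZModPow_sum_iterate hh z
    rw [hsum, ← map_zero (toZModPow n), toZModPow_eq_iff_pow_dvd_sub, sub_zero] at hzero
    exact hzero
  suffices toZModPow (n + 1) (f^[p ^ n] z) = toZModPow (n + 1) (z + (p : ℤ_[p]) ^ n * c) from
    this.trans (map_add _ _ _)
  rw [toZModPow_eq_iff_pow_dvd_sub, hiter, add_sub_cancel_left, pow_succ']
  exact mul_dvd_mul_left _ hdvd

theorem TransitiveMod.succ_of_iterate_pow_semiconj_add (hc : IsUnit c) (htrans : TransitiveMod f n)
    (hshift : Semiconj (toZModPow (n + 1)) f^[p ^ n]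
      (· + toZModPow (n + 1) ((p : ℤ_[p]) ^ n * c))) :
    TransitiveMod f (n + 1) := by
  intro z a
  obtain ⟨y, rfl⟩ := toZModPow_surjective (n + 1) a
  obtain ⟨k, hk⟩ := htrans z (toZModPow n y)
  obtain ⟨t, ht⟩ := toZModPow_eq_iff_pow_dvd_sub.1 hk.symm
  obtain ⟨j, hj, s, hs⟩ := exists_lt_dvd_sub_natCast_mul hc t
  have hlt : p ^ n * j + k < p ^ (n + 1) := calc
    p ^ n * j + k < p ^ n * (j + 1) := by rw [mul_add_one]; exact Nat.add_lt_add_left k.2 _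
    _ ≤ p ^ (n + 1) := by rw [pow_succ]; exact Nat.mul_le_mul_left _ hj
  have htranslate : toZModPow (n + 1) (f^[p ^ n * j + k] z) =
      toZModPow (n + 1) (f^[k] z + (j : ℤ_[p]) * ((p : ℤ_[p]) ^ n * c)) := by
    rw [iterate_add_apply, iterate_mul, hshift.iterate_right j, add_right_iterate, map_add,
      ← nsmul_eq_mul, map_nsmul]
  refine ⟨⟨p ^ n * j + k, hlt⟩, htranslate.trans (Eq.symm ?_)⟩
  exact toZModPow_eq_iff_pow_dvd_sub.2 ⟨s, by linear_combination ht + p ^ n * hs⟩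

theorem Compatible.transitiveMod_of_sum_residueMap_eq_zero (hh : Compatible p h) (hc : IsUnit c)
    (hsum : ∀ n, ∑ a, residueMap h n a = 0) (n : ℕ) :
    TransitiveMod (fun z ↦ c + z + p * h z) n := by
  induction n with
  | zero => exact transitiveMod_zero _
  | succ n ih =>
    exact ih.succ_of_iterate_pow_semiconj_add hc (ih.iterate_pow_semiconj_add hh (hsum n))

end Padic

end Paper

/-- for a prime `p`, a compatible `g : ℤ_p → ℤ_p` and a unit `c ∈ ℤ_p`,
the map `z ↦ c + z + p·(g (z+1) − g z)` is compatible and ergodic, and for every `d`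
the map `z ↦ d + c·z + p·g z` is compatible and measure-preserving. -/
theorem statement2 (p : ℕ) [Fact p.Prime] (g : ℤ_[p] → ℤ_[p])
    (hg : Paper.Compatible p g) (c : ℤ_[p]) (hc : IsUnit c) :
    (Paper.Compatible p (fun z => c + z + (p : ℤ_[p]) * (g (z + 1) - g z)) ∧
      Paper.Ergodic p (fun z => c + z + (p : ℤ_[p]) * (g (z + 1) - g z))) ∧
    ∀ d : ℤ_[p],
      Paper.Compatible p (fun z => d + c * z + (p : ℤ_[p]) * g z) ∧
      Paper.MeasurePreserving p (fun z => d + c * z + (p : ℤ_[p]) * g z) := by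
  refine ⟨?_, fun d ↦ ?_⟩
  · have hdiff : Paper.Compatible p (fwdDiff 1 g) := hg.fwdDiff 1
    have hf : Paper.Compatible p (fun z ↦ c + z + (p : ℤ_[p]) * fwdDiff 1 g z) :=
      ((Paper.compatible_const c).add Paper.compatible_id).add (hdiff.const_mul _)
    exact ⟨hf, hf.ergodic_of_forall_transitiveMod
      (hdiff.transitiveMod_of_sum_residueMap_eq_zero hc (hg.sum_residueMap_fwdDiff 1))⟩
  · have hf : Paper.Compatible p (fun z ↦ d + c * z + (p : ℤ_[p]) * g z) :=
      ((Paper.compatible_const d).add (Paper.compatible_id.const_mul c)).add (hg.const_mul _)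
    exact ⟨hf, hf.measurePreserving_of_pow_dvd_sub
      (hg.pow_dvd_sub_of_pow_dvd_affine_add_sub hc d)⟩
end

section
/- Every compatible and ergodic map f : ℤ₂ → ℤ₂ can be represented as f(x) = 1 + x + 2·(g(x+1) − g(x)) for a suitable compatible map g : ℤ₂ → ℤ₂, and every compatible and measure-preserving map f : ℤ₂ → ℤ₂ can be represented as f(x) = d + x + 2·g(x) for a suitable d ∈ ℤ₂ and a suitable compatible map g : ℤ₂ → ℤ₂. -/
/-!
In the discrete valuation ring `ℤ_[p]`, a map `f` is compatible iff `x - y ∣ f x - f y`, and for a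
measure-preserving `f` these two elements are even associated. Units of `ℤ_[2]` are odd, so for
`p = 2` passing from `f` to `f x - x` gains a factor `2`: `2 * (x - y) ∣ (f x - x) - (f y - y)`.
Hence `f x = d + x + 2 * h x` with `h` compatible.

If `f` is ergodic then `d = 1` is allowed, and `h` has to be written as `g (x + 1) - g x`. A
continuous `g` comes from shifting the Mahler coefficients of `h`; it is compatible as soon as
`p ^ n` divides `∑ i < p ^ n, h i` for all `n`. As `h` is compatible, this sum may be
taken modulo `2 ^ n` along the orbit of `0`, where it telescopes: since
`f (f^[j] 0) - f^[j] 0 = 1 + 2 * h (f^[j] 0)`, it is half of `f^[2 ^ n] 0 - 2 ^ n`, and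
`2 ^ (n + 1)` divides the latter because `f^[j] 0` is associated to `j`.
-/

namespace Paper

open PadicInt Finset Function
open scoped fwdDiff

lemma dvd_iff_forall_pow_dvd {R : Type*} [CommRing R] [IsDomain R] [IsDiscreteValuationRing R]
    {ϖ a b : R} (hϖ : Irreducible ϖ) : a ∣ b ↔ ∀ n : ℕ, ϖ ^ n ∣ a → ϖ ^ n ∣ b := by
  refine ⟨fun hab n hn ↦ hn.trans hab, fun h ↦ ?_⟩
  rcases eq_or_ne a 0 with rfl | ha
  · by_contra hb
    obtain ⟨m, hm⟩ :=
      IsDiscreteValuationRing.associated_pow_irreducible (mt zero_dvd_iff.mpr hb) hϖ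
    have hdvd : ϖ ^ (m + 1) ∣ ϖ ^ m := (h (m + 1) (dvd_zero _)).trans hm.dvd
    exact m.not_succ_le_self ((pow_dvd_pow_iff hϖ.ne_zero hϖ.not_isUnit).mp hdvd)
  · obtain ⟨m, hm⟩ := IsDiscreteValuationRing.associated_pow_irreducible ha hϖ
    exact hm.dvd.trans (h m hm.symm.dvd)

lemma associated_iff_forall_pow_dvd_iff {R : Type*} [CommRing R] [IsDomain R]
    [IsDiscreteValuationRing R] {ϖ a b : R} (hϖ : Irreducible ϖ) :
    Associated a b ↔ ∀ n : ℕ, ϖ ^ n ∣ a ↔ ϖ ^ n ∣ b := by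
  rw [← dvd_dvd_iff_associated, dvd_iff_forall_pow_dvd hϖ, dvd_iff_forall_pow_dvd hϖ,
    ← forall_and]
  exact forall_congr' fun _ ↦ iff_def.symm

lemma isClosed_setOf_dvd {R : Type*} [Semigroup R] [TopologicalSpace R] [ContinuousMul R]
    [CompactSpace R] [T2Space R] (a : R) : IsClosed {b : R | a ∣ b} := by
  have hrange : {b : R | a ∣ b} = Set.range (a * ·) := by
    ext b
    exact exists_congr fun _ ↦ eq_comm
  exact hrange ▸ (isCompact_range (continuous_const_mul a)).isClosed

section Orbit

variable {α : Type*} {φ : α → α}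

lemma bijOn_iterate_Iio_minimalPeriod (hφ : ∀ a b, ∃ k, φ^[k] a = b) (a : α) :
    Set.BijOn (φ^[·] a) (Set.Iio (minimalPeriod φ a)) Set.univ := by
  obtain ⟨k, hk⟩ := hφ (φ a) a
  have hpos : 0 < minimalPeriod φ a := IsPeriodicPt.minimalPeriod_pos k.succ_pos hk
  refine ⟨Set.mapsTo_univ _ _, iterate_injOn_Iio_minimalPeriod, fun b _ ↦ ?_⟩
  obtain ⟨m, hm⟩ := hφ a b
  exact ⟨m % minimalPeriod φ a, Nat.mod_lt _ hpos, iterate_mod_minimalPeriod_eq.trans hm⟩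

variable [Fintype α]

lemma minimalPeriod_eq_card (hφ : ∀ a b, ∃ k, φ^[k] a = b) (a : α) :
    minimalPeriod φ a = Fintype.card α := by
  simpa using Set.ncard_congr' (bijOn_iterate_Iio_minimalPeriod hφ a).equiv

lemma sum_range_card_iterate {M : Type*} [AddCommMonoid M] (hφ : ∀ a b, ∃ k, φ^[k] a = b)
    (a : α) (Φ : α → M) : ∑ j ∈ range (Fintype.card α), Φ (φ^[j] a) = ∑ b, Φ b := by
  have hbij := bijOn_iterate_Iio_minimalPeriod hφ a
  rw [minimalPeriod_eq_card hφ, ← coe_range, ← coe_univ] at hbij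
  exact sum_nbij _ hbij.mapsTo hbij.injOn hbij.surjOn fun _ _ ↦ rfl

end Orbit

section Padic

variable {p : ℕ} [Fact p.Prime] {f g h : ℤ_[p] → ℤ_[p]}

lemma toZModPow_eq_zero_iff_dvd (n : ℕ) (x : ℤ_[p]) :
    toZModPow n x = 0 ↔ (p : ℤ_[p]) ^ n ∣ x := by
  rw [← RingHom.mem_ker, ker_toZModPow, Ideal.mem_span_singleton]

lemma toZModPow_eq_iff_dvd_sub (n : ℕ) (x y : ℤ_[p]) :
    toZModPow n x = toZModPow n y ↔ (p : ℤ_[p]) ^ n ∣ x - y := by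
  rw [← sub_eq_zero, ← map_sub, toZModPow_eq_zero_iff_dvd]

lemma compatible_iff_sub_dvd_sub : Compatible p f ↔ ∀ x y, x - y ∣ f x - f y := by
  simp only [Compatible, toZModPow_eq_iff_dvd_sub]
  refine ⟨fun hf x y ↦ (dvd_iff_forall_pow_dvd irreducible_p).mpr fun n ↦ ?_,
    fun hf n _ x y hxy ↦ hxy.trans (hf x y)⟩
  rcases n.eq_zero_or_pos with rfl | hn
  · simp
  · exact hf n hn x y

lemma Compatible.continuous (hf : Compatible p f) : Continuous f := by
  refine (LipschitzWith.of_dist_le_mul (K := 1) fun x y ↦ ?_).continuous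
  obtain ⟨c, hc⟩ := compatible_iff_sub_dvd_sub.mp hf x y
  rw [dist_eq_norm, dist_eq_norm, hc, norm_mul, mul_comm]
  exact mul_le_mul_of_nonneg_right (norm_le_one c) (norm_nonneg _)

lemma MeasurePreserving.associated_sub (hf : MeasurePreserving p f) (x y : ℤ_[p]) :
    Associated (x - y) (f x - f y) := by
  refine (associated_iff_forall_pow_dvd_iff irreducible_p).mpr fun n ↦ ?_
  rcases n.eq_zero_or_pos with rfl | hn
  · simp
  · obtain ⟨fn, hfn, hbij⟩ := hf n hn
    rw [← toZModPow_eq_iff_dvd_sub, ← toZModPow_eq_iff_dvd_sub, ← hfn, ← hfn,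
      hbij.injective.eq_iff]

lemma Ergodic.measurePreserving (hf : Ergodic p f) : MeasurePreserving p f := fun n hn ↦
  let ⟨fn, hfn, hbij, _⟩ := hf n hn
  ⟨fn, hfn, hbij⟩

lemma Ergodic.associated_iterate_zero (hf : Ergodic p f) (j : ℕ) :
    Associated (f^[j] 0) (j : ℤ_[p]) := by
  refine (associated_iff_forall_pow_dvd_iff irreducible_p).mpr fun n ↦ ?_
  rcases n.eq_zero_or_pos with rfl | hn
  · simp
  · obtain ⟨fn, hfn, -, htrans⟩ := hf n hn
    have hsemi : Semiconj (toZModPow n) f fn := fun x ↦ (hfn x).symm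
    rw [← toZModPow_eq_zero_iff_dvd, ← toZModPow_eq_zero_iff_dvd, (hsemi.iterate_right j).eq,
      map_zero, map_natCast, ZMod.natCast_eq_zero_iff]
    change IsPeriodicPt fn j 0 ↔ _
    rw [isPeriodicPt_iff_minimalPeriod_dvd, minimalPeriod_eq_card htrans, ZMod.card]

lemma Ergodic.pow_dvd_sum_iterate_sub_sum (hf : Ergodic p f) (hh : Compatible p h) (n : ℕ) :
    (p : ℤ_[p]) ^ n ∣ ∑ j ∈ range (p ^ n), h (f^[j] 0) - ∑ i ∈ range (p ^ n), h i := by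
  rcases n.eq_zero_or_pos with rfl | hn
  · simp
  obtain ⟨fn, hfn, -, htrans⟩ := hf n hn
  have hsemi : Semiconj (toZModPow n) f fn := fun x ↦ (hfn x).symm
  have hsucc : ∀ a b : ZMod (p ^ n), ∃ k, (· + 1)^[k] a = b := fun a b ↦
    ⟨(b - a).val, by simp [add_right_iterate]⟩
  obtain ⟨Φ, hΦ⟩ : ∃ Φ, toZModPow n ∘ h = Φ ∘ toZModPow n :=
    (factorsThrough_iff _).mp fun x y hxy ↦ hh n hn x y hxy
  rw [← toZModPow_eq_iff_dvd_sub, map_sum, map_sum]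
  have horbit (j : ℕ) : toZModPow n (h (f^[j] 0)) = Φ (fn^[j] 0) := by
    simpa [(hsemi.iterate_right j).eq] using congrFun hΦ (f^[j] 0)
  have hnat (i : ℕ) : toZModPow n (h i) = Φ ((· + 1)^[i] 0) := by
    simpa [add_right_iterate] using congrFun hΦ (i : ℤ_[p])
  calc ∑ j ∈ range (p ^ n), toZModPow n (h (f^[j] 0))
    _ = ∑ b, Φ b := by
      simp only [horbit]
      simpa only [ZMod.card] using sum_range_card_iterate htrans 0 Φ
    _ = ∑ i ∈ range (p ^ n), toZModPow n (h i) := by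
      simp only [hnat]
      simpa only [ZMod.card] using (sum_range_card_iterate hsucc 0 Φ).symm

lemma dvd_of_dvd_add_one_sub {R : Type*} [NonUnitalRing R] [TopologicalSpace R] [ContinuousMul R]
    [CompactSpace R] [T2Space R] {F : ℤ_[p] → R} {a : R} (hF : Continuous F) (h0 : a ∣ F 0)
    (hstep : ∀ x, a ∣ F (x + 1) - F x) (x : ℤ_[p]) : a ∣ F x := by
  refine denseRange_natCast.induction_on x ((isClosed_setOf_dvd a).preimage hF) fun m ↦ ?_
  induction m with
  | zero => simpa using h0
  | succ m ih => simpa using (dvd_sub_left ih).mp (hstep m)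

lemma compatible_of_pow_dvd_add_pow_sub (hg : Continuous g)
    (hper : ∀ (n : ℕ) x, (p : ℤ_[p]) ^ n ∣ g (x + (p : ℤ_[p]) ^ n) - g x) : Compatible p g := by
  refine compatible_iff_sub_dvd_sub.mpr fun x y ↦
    (dvd_iff_forall_pow_dvd irreducible_p).mpr fun n ⟨c, hc⟩ ↦ ?_
  have hmul (k : ℤ_[p]) : (p : ℤ_[p]) ^ n ∣ g (y + (p : ℤ_[p]) ^ n * k) - g y := by
    refine dvd_of_dvd_add_one_sub (F := fun k ↦ g (y + (p : ℤ_[p]) ^ n * k) - g y)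
      (by fun_prop) (by simp) (fun k ↦ ?_) k
    simpa [mul_add, add_assoc] using hper n (y + (p : ℤ_[p]) ^ n * k)
  simpa [← hc] using hmul c

lemma exists_continuousMap_fwdDiff_eq {E : Type*} [NormedAddCommGroup E] [Module ℤ_[p] E]
    [IsBoundedSMul ℤ_[p] E] [IsUltrametricDist E] [CompleteSpace E] (h : C(ℤ_[p], E)) :
    ∃ g : C(ℤ_[p], E), Δ_[1] ⇑g = h := by
  -- The `k`-th Mahler coefficient of `Δ g` is the `(k + 1)`-st one of `g`.
  let a : ℕ → E := Nat.rec 0 fun k _ ↦ (Δ_[1])^[k] h 0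
  have ha : Filter.Tendsto a Filter.atTop (nhds 0) :=
    (Filter.tendsto_add_atTop_iff_nat 1).mp (fwdDiff_tendsto_zero h)
  let Δg : C(ℤ_[p], E) := ⟨Δ_[1] (mahlerSeries a), by unfold fwdDiff; fun_prop⟩
  refine ⟨mahlerSeries a, congrArg DFunLike.coe (?_ : Δg = h)⟩
  refine (mahlerEquiv E).injective (DFunLike.ext _ _ fun k ↦ ?_)
  exact fwdDiff_mahlerSeries ha (k + 1)

lemma Compatible.exists_compatible_add_one_sub_eq (hh : Compatible p h)
    (hsum : ∀ n : ℕ, (p : ℤ_[p]) ^ n ∣ ∑ i ∈ range (p ^ n), h i) :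
    ∃ g, Compatible p g ∧ ∀ x, g (x + 1) - g x = h x := by
  obtain ⟨g, hg⟩ := exists_continuousMap_fwdDiff_eq ⟨h, hh.continuous⟩
  have hgh (x : ℤ_[p]) : g (x + 1) - g x = h x := congrFun hg x
  refine ⟨g, compatible_of_pow_dvd_add_pow_sub g.continuous fun n ↦ ?_, hgh⟩
  refine dvd_of_dvd_add_one_sub (by fun_prop) ?_ fun x ↦ ?_
  · have htelescope : ∑ i ∈ range (p ^ n), h i = g ((p ^ n : ℕ) : ℤ_[p]) - g 0 := by
      simpa [hgh] using sum_range_sub (fun i : ℕ ↦ g i) (p ^ n)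
    simpa [htelescope] using hsum n
  · have hdvd : (p : ℤ_[p]) ^ n ∣ h (x + (p : ℤ_[p]) ^ n) - h x := by
      simpa using compatible_iff_sub_dvd_sub.mp hh (x + (p : ℤ_[p]) ^ n) x
    rwa [← hgh, ← hgh, add_right_comm, sub_sub_sub_comm] at hdvd

end Padic

section TwoAdic

variable {f h : ℤ_[2] → ℤ_[2]}

lemma two_mul_dvd_sub_of_associated {a b : ℤ_[2]} (hab : Associated a b) : 2 * a ∣ b - a := by
  obtain ⟨u, rfl⟩ := hab
  have hodd : toZModPow 1 (u : ℤ_[2]) = toZModPow 1 1 := by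
    have hunit : ∀ z : ZMod (2 ^ 1), IsUnit z → z = 1 := by decide
    simpa using hunit _ (u.isUnit.map (toZModPow 1))
  have hdvd : (2 : ℤ_[2]) ∣ u - 1 := by
    simpa using (toZModPow_eq_iff_dvd_sub 1 _ _).mp hodd
  simpa [mul_sub, mul_comm] using mul_dvd_mul_left a hdvd

lemma MeasurePreserving.exists_eq_add_two_mul (hf : MeasurePreserving 2 f) {d : ℤ_[2]}
    (hd : 2 ∣ f 0 - d) : ∃ g, Compatible 2 g ∧ ∀ x, f x = d + x + 2 * g x := by
  have hgain (x y : ℤ_[2]) : 2 * (x - y) ∣ (f x - f y) - (x - y) :=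
    two_mul_dvd_sub_of_associated (hf.associated_sub x y)
  have heven (x : ℤ_[2]) : 2 ∣ f x - x - d := by
    convert dvd_add (dvd_of_mul_right_dvd (hgain x 0)) hd using 1
    ring
  choose g hg using heven
  refine ⟨g, compatible_iff_sub_dvd_sub.mpr fun x y ↦ ?_, fun x ↦ by linear_combination hg x⟩
  refine (mul_dvd_mul_iff_left (two_ne_zero' ℤ_[2])).mp ?_
  convert hgain x y using 1
  linear_combination hg y - hg x

lemma Ergodic.two_dvd_apply_zero_sub_one (hf : Ergodic 2 f) : 2 ∣ f 0 - 1 := by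
  simpa using two_mul_dvd_sub_of_associated (hf.associated_iterate_zero 1).symm

lemma Ergodic.two_pow_dvd_sum (hf : Ergodic 2 f) (hh : Compatible 2 h)
    (hfh : ∀ x, f x = 1 + x + 2 * h x) (n : ℕ) :
    (2 : ℤ_[2]) ^ n ∣ ∑ i ∈ range (2 ^ n), h i := by
  have htelescope : f^[2 ^ n] 0 - 2 ^ n = 2 * ∑ j ∈ range (2 ^ n), h (f^[j] 0) := by
    have hstep (j : ℕ) : f^[j + 1] 0 - f^[j] 0 = 1 + 2 * h (f^[j] 0) := by
      rw [iterate_succ_apply', hfh]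
      ring
    have hsum := sum_range_sub (f^[·] 0) (2 ^ n)
    simp only [hstep, sum_add_distrib, ← mul_sum] at hsum
    simpa [sub_eq_iff_eq_add'] using hsum.symm
  have hassoc : 2 * 2 ^ n ∣ f^[2 ^ n] 0 - 2 ^ n := by
    simpa using two_mul_dvd_sub_of_associated (hf.associated_iterate_zero (2 ^ n)).symm
  have horbit : 2 ^ n ∣ ∑ j ∈ range (2 ^ n), h (f^[j] 0) := by
    rwa [htelescope, mul_dvd_mul_iff_left two_ne_zero] at hassoc
  exact (dvd_sub_right horbit).mp (by simpa using hf.pow_dvd_sum_iterate_sub_sum hh n)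

end TwoAdic

end Paper

/-- every compatible ergodic `f : ℤ₂ → ℤ₂` has the form
`f x = 1 + x + 2·(g (x+1) − g x)` for some compatible `g`, and every compatible
measure-preserving `f` has the form `f x = d + x + 2·g x` for some `d ∈ ℤ₂` and
compatible `g`. -/
theorem statement3 (f : ℤ_[2] → ℤ_[2]) :
    (Paper.Compatible 2 f ∧ Paper.Ergodic 2 f →
      ∃ g : ℤ_[2] → ℤ_[2], Paper.Compatible 2 g ∧
        ∀ x, f x = 1 + x + 2 * (g (x + 1) - g x)) ∧
    (Paper.Compatible 2 f ∧ Paper.MeasurePreserving 2 f →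
      ∃ (d : ℤ_[2]) (g : ℤ_[2] → ℤ_[2]), Paper.Compatible 2 g ∧
        ∀ x, f x = d + x + 2 * g x) := by
  constructor
  · rintro ⟨-, hf⟩
    obtain ⟨h, hh, hfh⟩ :=
      hf.measurePreserving.exists_eq_add_two_mul hf.two_dvd_apply_zero_sub_one
    obtain ⟨g, hg, hgh⟩ := hh.exists_compatible_add_one_sub_eq (hf.two_pow_dvd_sum hh hfh)
    exact ⟨g, hg, fun x ↦ by rw [hgh, hfh]⟩
  · rintro ⟨-, hf⟩
    obtain ⟨g, hg, hfg⟩ := hf.exists_eq_add_two_mul (d := f 0) (by simp)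
    exact ⟨f 0, g, hg, hfg⟩
end

section
/- A map T : ℤ₂ → ℤ₂ is compatible and measure-preserving if and only if for every i ≥ 0 there exists a Boolean function φ_i : {0,1}^i → ℤ/2 such that for all x ∈ ℤ₂, δ_i(T(x)) = δ_i(x) + φ_i(δ₀(x),…,δ_{i−1}(x)) in ℤ/2. -/
/-!
Having the same residue mod `2 ^ n` means having the same first `n` binary digits, so `T` is
compatible and measure-preserving iff, for all `n`, the first `n` digits of `T x` and those of `x`
determine each other. Adding one digit at a time, this says that for `x` and `y` with the same first
`i` digits, `δ_i (T x) = δ_i (T y)` iff `δ_i x = δ_i y`. Over `𝔽₂` such an equivalence is the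
equation `δ_i (T x) - δ_i x = δ_i (T y) - δ_i y`, so the difference `δ_i (T x) - δ_i x` is a
function of the first `i` digits of `x`, and that function is `φ_i`.
-/

namespace Paper

theorem forall_lt_iff_forall_lt_iff {P Q : ℕ → Prop} :
    (∀ n, (∀ j < n, P j) ↔ ∀ j < n, Q j) ↔ ∀ i, (∀ j < i, Q j) → (P i ↔ Q i) := by
  constructor
  · intro h i hQ
    have hP : ∀ j < i, P j := (h i).mpr hQ
    simpa only [Nat.forall_lt_succ_right, and_iff_right hP, and_iff_right hQ] using h (i + 1)
  · intro h n
    induction n with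
    | zero => simp only [not_lt_zero, false_imp_iff, implies_true]
    | succ n ih =>
      rw [Nat.forall_lt_succ_right, Nat.forall_lt_succ_right, ih]
      exact and_congr_right (h n)

theorem exists_eq_add_comp_iff_factorsThrough {X Y G : Type*} [AddCommGroup G] (u v : X → G)
    (w : X → Y) :
    (∃ φ : Y → G, ∀ x, v x = u x + φ (w x)) ↔ (v - u).FactorsThrough w := by
  simp only [Function.factorsThrough_iff, sub_eq_iff_eq_add', funext_iff, Pi.add_apply,
    Function.comp_apply]

theorem zmod_two_sub_eq_sub_iff :
    ∀ a b c d : ZMod 2, a - c = b - d ↔ (a = b ↔ c = d) := by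
  decide

section Residues

variable {p : ℕ} [Fact p.Prime]

theorem toZModPow_zero_eq (x y : ℤ_[p]) : PadicInt.toZModPow 0 x = PadicInt.toZModPow 0 y := by
  have : Subsingleton (ZMod (p ^ 0)) := by rw [pow_zero]; infer_instance
  exact Subsingleton.elim _ _

theorem val_toZModPow_mod {m n : ℕ} (h : m ≤ n) (x : ℤ_[p]) :
    (PadicInt.toZModPow n x).val % p ^ m = (PadicInt.toZModPow m x).val := by
  rw [← PadicInt.cast_toZModPow m n h x, ZMod.cast_eq_val, ZMod.val_natCast]

theorem compatible_and_measurePreserving_iff {f : ℤ_[p] → ℤ_[p]} :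
    (Compatible p f ∧ MeasurePreserving p f) ↔
      ∀ n x y, PadicInt.toZModPow n (f x) = PadicInt.toZModPow n (f y) ↔
        PadicInt.toZModPow n x = PadicInt.toZModPow n y := by
  constructor
  · rintro ⟨hcompat, hmeas⟩ n x y
    rcases n.eq_zero_or_pos with rfl | hn
    · exact iff_of_true (toZModPow_zero_eq _ _) (toZModPow_zero_eq _ _)
    · obtain ⟨fn, hfn, hbij⟩ := hmeas n hn
      refine ⟨fun h => hbij.injective ?_, hcompat n hn x y⟩
      rwa [hfn, hfn]
  · intro h
    refine ⟨fun n _ x y => (h n x y).mpr, fun n _ => ?_⟩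
    obtain ⟨fn, hfn⟩ : ∃ fn, PadicInt.toZModPow n ∘ f = fn ∘ PadicInt.toZModPow n :=
      (Function.factorsThrough_iff _).mp fun x y => (h n x y).mpr
    have hfn_apply (x) : fn (PadicInt.toZModPow n x) = PadicInt.toZModPow n (f x) :=
      (congrFun hfn x).symm
    have hinj : Function.Injective fn :=
      (ZMod.ringHom_surjective (PadicInt.toZModPow n)).forall₂.mpr fun x y => by
        simpa only [hfn_apply] using (h n x y).mp
    exact ⟨fn, hfn_apply, Finite.injective_iff_bijective.mp hinj⟩

end Residues

theorem val_digit (n : ℕ) (x : ℤ_[2]) :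
    (digit n x).val = (PadicInt.toZModPow (n + 1) x).val / 2 ^ n := by
  have hlt : (PadicInt.toZModPow (n + 1) x).val / 2 ^ n < 2 :=
    Nat.div_lt_of_lt_mul (ZMod.val_lt _)
  rw [digit, ZMod.natCast_mod, ZMod.val_natCast_of_lt hlt]

theorem toZModPow_succ_eq_iff (n : ℕ) (x y : ℤ_[2]) :
    PadicInt.toZModPow (n + 1) x = PadicInt.toZModPow (n + 1) y ↔
      PadicInt.toZModPow n x = PadicInt.toZModPow n y ∧ digit n x = digit n y := by
  simp only [← (ZMod.val_injective _).eq_iff, val_digit, ← val_toZModPow_mod n.le_succ]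
  rw [and_comm]
  exact Nat.ext_div_mod_iff _ _ _

theorem toZModPow_eq_iff_forall_digit_eq (n : ℕ) (x y : ℤ_[2]) :
    PadicInt.toZModPow n x = PadicInt.toZModPow n y ↔ ∀ j < n, digit j x = digit j y := by
  induction n with
  | zero => exact iff_of_true (toZModPow_zero_eq x y) fun j hj => absurd hj j.not_lt_zero
  | succ n ih => rw [toZModPow_succ_eq_iff, ih, Nat.forall_lt_succ_right]

theorem compatible_and_measurePreserving_iff_digit {T : ℤ_[2] → ℤ_[2]} :
    (Compatible 2 T ∧ MeasurePreserving 2 T) ↔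
      ∀ i x y, (∀ j < i, digit j x = digit j y) →
        (digit i (T x) = digit i (T y) ↔ digit i x = digit i y) := by
  simp only [compatible_and_measurePreserving_iff, toZModPow_eq_iff_forall_digit_eq]
  exact ⟨fun h i x y => forall_lt_iff_forall_lt_iff.mp (fun n => h n x y) i,
    fun h n x y => forall_lt_iff_forall_lt_iff.mpr (fun i => h i x y) n⟩

end Paper

/-- `T : ℤ₂ → ℤ₂` is compatible and measure-preserving iff for every `i`
there is a Boolean function `φ_i` of `i` variables such that
`δ_i (T x) = δ_i x + φ_i (δ₀ x, …, δ_{i-1} x)` for all `x`. -/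
theorem statement4 (T : ℤ_[2] → ℤ_[2]) :
    (Paper.Compatible 2 T ∧ Paper.MeasurePreserving 2 T) ↔
      ∀ i : ℕ, ∃ φ : (Fin i → ZMod 2) → ZMod 2,
        ∀ x : ℤ_[2],
          Paper.digit i (T x) = Paper.digit i x + φ (fun j => Paper.digit j.val x) := by
  rw [Paper.compatible_and_measurePreserving_iff_digit]
  refine forall_congr' fun i => ?_
  rw [Paper.exists_eq_add_comp_iff_factorsThrough (Paper.digit i) (fun x => Paper.digit i (T x))]
  simp only [Function.FactorsThrough, funext_iff, Fin.forall_iff, Pi.sub_apply,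
    Paper.zmod_two_sub_eq_sub_iff]
end

section
/- A map T : ℤ₂ → ℤ₂ is compatible and ergodic if and only if for every i ≥ 0 there exists a Boolean function φ_i : {0,1}^i → ℤ/2 of odd weight (i.e., φ_i takes the value 1 at an odd number of points of {0,1}^i) such that for all x ∈ ℤ₂, δ_i(T(x)) = δ_i(x) + φ_i(δ₀(x),…,δ_{i−1}(x)) in ℤ/2. -/
/-!
Modulo `2 ^ (n + 1)`, a compatible map permuting the residues acts on the pair
(lower `n` digits, digit `n`) as a skew product `(a, c) ↦ (f a, c + φ a)` over its reduction `f`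
modulo `2 ^ n`, because every permutation of `ZMod 2` is a translation. If `f` is a single cycle,
going once around it returns to `a` and adds the Birkhoff sum of `φ` over the cycle, that is
`∑ a, φ a`, to `c`. Hence the skew product is again a single cycle iff this total is `1`, i.e. iff
`φ` has odd weight, and the theorem follows by induction on `n`.
-/

namespace Paper

open Function

/-- A self-map is iterate-transitive if every point is reached from every point by iteration,
so that it is a permutation consisting of a single finite cycle. -/
def IterateTransitive {α : Type*} (f : α → α) : Prop :=
  ∀ a b : α, ∃ k : ℕ, f^[k] a = b

namespace IterateTransitive

variable {α β : Type*} {f : α → α}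

lemma mem_periodicPts (hf : IterateTransitive f) (a : α) : a ∈ periodicPts f :=
  let ⟨k, hk⟩ := hf (f a) a
  ⟨k + 1, k.succ_pos, hk⟩

lemma bijective (hf : IterateTransitive f) : Bijective f := by
  have h := bijOn_periodicPts f
  rwa [Set.eq_univ_of_forall hf.mem_periodicPts, Set.bijOn_univ] at h

lemma of_semiconj {g : β → β} {π : α → β} (hf : IterateTransitive f) (hπ : Semiconj π f g)
    (hsurj : Surjective π) : IterateTransitive g := by
  intro b b'
  obtain ⟨a, rfl⟩ := hsurj b
  obtain ⟨a', rfl⟩ := hsurj b'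
  obtain ⟨k, rfl⟩ := hf a a'
  exact ⟨k, ((hπ.iterate_right k).eq a).symm⟩

lemma birkhoffSum_minimalPeriod [Fintype α] {M : Type*} [AddCommMonoid M]
    (hf : IterateTransitive f) (φ : α → M) (a : α) :
    birkhoffSum f φ (minimalPeriod f a) a = ∑ b, φ b := by
  refine Finset.sum_nbij (f^[·] a) (fun _ _ => Finset.mem_univ _) ?_ ?_ (fun _ _ => rfl)
  · rw [Finset.coe_range]
    exact iterate_injOn_Iio_minimalPeriod
  · intro b _
    obtain ⟨k, hk⟩ := hf a b
    have hpos := minimalPeriod_pos_of_mem_periodicPts (hf.mem_periodicPts a)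
    exact ⟨k % minimalPeriod f a, by simpa using k.mod_lt hpos,
      iterate_mod_minimalPeriod_eq.trans hk⟩

end IterateTransitive

lemma birkhoffSum_mul_of_isPeriodicPt {α M : Type*} [AddCommMonoid M] {f : α → α} {n : ℕ} {a : α}
    (h : IsPeriodicPt f n a) (φ : α → M) (m : ℕ) :
    birkhoffSum f φ (n * m) a = m • birkhoffSum f φ n a := by
  induction m with
  | zero => simp
  | succ m ih => rw [Nat.mul_succ, birkhoffSum_add, ih, (h.mul_const m).eq, succ_nsmul]

section SkewProduct

variable {α G : Type*}

/-- The skew product over `f` with cocycle `φ`: it acts by `f` on the base and translates the fibre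
over `a` by `φ a`. -/
def skewProduct [Add G] (f : α → α) (φ : α → G) (p : α × G) : α × G :=
  (f p.1, p.2 + φ p.1)

lemma skewProduct_iterate [AddCommMonoid G] (f : α → α) (φ : α → G) (k : ℕ) (p : α × G) :
    (skewProduct f φ)^[k] p = (f^[k] p.1, p.2 + birkhoffSum f φ k p.1) := by
  induction k with
  | zero => simp
  | succ k ih =>
    rw [iterate_succ_apply', ih, iterate_succ_apply', birkhoffSum_succ, ← add_assoc, skewProduct]

theorem iterateTransitive_skewProduct_iff [Fintype α] [Nonempty α] [AddCommGroup G] {f : α → α}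
    (hf : IterateTransitive f) (φ : α → G) :
    IterateTransitive (skewProduct f φ) ↔ ∀ c : G, ∃ m : ℕ, m • ∑ a, φ a = c := by
  have sum_turns (a : α) (m : ℕ) :
      birkhoffSum f φ (minimalPeriod f a * m) a = m • ∑ b, φ b := by
    rw [birkhoffSum_mul_of_isPeriodicPt (isPeriodicPt_minimalPeriod f a),
      hf.birkhoffSum_minimalPeriod]
  constructor
  · intro h c
    obtain ⟨a⟩ := ‹Nonempty α›
    obtain ⟨k, hk⟩ := h (a, 0) (a, c)
    rw [skewProduct_iterate, zero_add, Prod.mk.injEq] at hk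
    obtain ⟨m, rfl⟩ : minimalPeriod f a ∣ k := IsPeriodicPt.minimalPeriod_dvd hk.1
    exact ⟨m, (sum_turns a m).symm.trans hk.2⟩
  · rintro h ⟨a, c⟩ ⟨b, d⟩
    obtain ⟨k, rfl⟩ := hf a b
    obtain ⟨m, hm⟩ := h (d - (c + birkhoffSum f φ k a))
    have hper : f^[minimalPeriod f (f^[k] a) * m] (f^[k] a) = f^[k] a :=
      (isPeriodicPt_minimalPeriod f _).mul_const m
    refine ⟨minimalPeriod f (f^[k] a) * m + k, ?_⟩
    rw [iterate_add_apply, skewProduct_iterate, skewProduct_iterate, hper, sum_turns, hm,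
      add_sub_cancel]

lemma zmod_two_apply_eq_add_apply_zero_of_injective :
    ∀ {g : ZMod 2 → ZMod 2}, Injective g → ∀ c, g c = c + g 0 := by
  decide

lemma exists_eq_skewProduct_of_injective {f : α → α} {F : α × ZMod 2 → α × ZMod 2}
    (hF : Injective F) (hfst : Semiconj Prod.fst F f) : ∃ φ, F = skewProduct f φ := by
  refine ⟨fun a => (F (a, 0)).2, funext fun ⟨a, c⟩ => Prod.ext (hfst (a, c)) ?_⟩
  have hfibre : Injective fun c => (F (a, c)).2 := fun c c' h =>
    (Prod.mk.inj (hF (Prod.ext ((hfst (a, c)).trans (hfst (a, c')).symm) h))).2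
  exact zmod_two_apply_eq_add_apply_zero_of_injective hfibre c

end SkewProduct

lemma zmod_two_forall_exists_nsmul_eq_iff {s : ZMod 2} :
    (∀ c : ZMod 2, ∃ m : ℕ, m • s = c) ↔ s = 1 := by
  constructor
  · intro h
    obtain ⟨m, hm⟩ := h 1
    have hs : s ≠ 0 := by
      rintro rfl
      simp at hm
    exact Fin.eq_one_of_ne_zero s hs
  · rintro rfl c
    exact ⟨c.val, by simp⟩

lemma odd_card_filter_eq_one_iff {α : Type*} [Fintype α] (φ : α → ZMod 2) :
    Odd (Finset.univ.filter fun a => φ a = 1).card ↔ ∑ a, φ a = 1 := by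
  have ite_eq : ∀ s : ZMod 2, (if s = 1 then 1 else 0) = s := by decide
  rw [← ZMod.natCast_eq_one_iff_odd, Finset.natCast_card_filter]
  simp only [ite_eq]

section TransitiveFactor

variable {X α β : Type*} {T : X → X} {π : X → α}

/-- `T` descends along `π` to an iterate-transitive self-map of `α`. -/
def HasTransitiveFactor (π : X → α) (T : X → X) : Prop :=
  ∃ F : α → α, Semiconj π T F ∧ IterateTransitive F

lemma hasTransitiveFactor_of_subsingleton [Subsingleton α] : HasTransitiveFactor π T :=
  ⟨id, fun _ => Subsingleton.elim _ _, fun _ _ => ⟨0, Subsingleton.elim _ _⟩⟩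

lemma hasTransitiveFactor_equiv_comp_iff (e : α ≃ β) :
    HasTransitiveFactor (e ∘ π) T ↔ HasTransitiveFactor π T := by
  constructor
  · rintro ⟨F, hπ, hF⟩
    have he := e.symm.semiconj_conj F
    refine ⟨e.symm.conj F, ?_, hF.of_semiconj he e.symm.surjective⟩
    simpa [← comp_assoc] using he.comp_left hπ
  · rintro ⟨F, hπ, hF⟩
    have he := e.semiconj_conj F
    exact ⟨e.conj F, he.comp_left hπ, hF.of_semiconj he e.surjective⟩

theorem hasTransitiveFactor_prodMk_iff [Nonempty X] [Fintype α] {d : X → ZMod 2}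
    (hsurj : Surjective fun x => (π x, d x)) (hπ : HasTransitiveFactor π T) :
    HasTransitiveFactor (fun x => (π x, d x)) T ↔
      ∃ φ : α → ZMod 2, Odd (Finset.univ.filter fun a => φ a = 1).card ∧
        ∀ x, d (T x) = d x + φ (π x) := by
  obtain ⟨f, hπf, hf⟩ := hπ
  have : Nonempty α := ‹Nonempty X›.map π
  have transitive_iff (φ : α → ZMod 2) : IterateTransitive (skewProduct f φ) ↔
      Odd (Finset.univ.filter fun a => φ a = 1).card := by
    rw [iterateTransitive_skewProduct_iff hf, zmod_two_forall_exists_nsmul_eq_iff,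
      odd_card_filter_eq_one_iff]
  constructor
  · rintro ⟨F, hF, hFt⟩
    have hfst : Semiconj Prod.fst F f := hsurj.forall.2 fun x =>
      (congrArg Prod.fst (hF x)).symm.trans (hπf x)
    obtain ⟨φ, rfl⟩ := exists_eq_skewProduct_of_injective hFt.bijective.injective hfst
    exact ⟨φ, (transitive_iff φ).1 hFt, fun x => congrArg Prod.snd (hF x)⟩
  · rintro ⟨φ, hodd, hd⟩
    exact ⟨skewProduct f φ, fun x => Prod.ext (hπf x) (hd x), (transitive_iff φ).2 hodd⟩

end TransitiveFactor

section Ergodic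

variable {p : ℕ} [Fact p.Prime] {f : ℤ_[p] → ℤ_[p]}

lemma Ergodic.compatible (hf : Ergodic p f) : Compatible p f := by
  intro n hn x y hxy
  obtain ⟨fn, hfn, -⟩ := hf n hn
  rw [← hfn, ← hfn, hxy]

lemma ergodic_iff_forall_hasTransitiveFactor :
    Ergodic p f ↔ ∀ n, HasTransitiveFactor (PadicInt.toZModPow (p := p) n) f := by
  constructor
  · intro h n
    rcases n.eq_zero_or_pos with rfl | hn
    · have : Subsingleton (ZMod (p ^ 0)) := inferInstanceAs (Subsingleton (ZMod 1))
      exact hasTransitiveFactor_of_subsingleton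
    · obtain ⟨fn, hfn, -, htrans⟩ := h n hn
      exact ⟨fn, fun x => (hfn x).symm, htrans⟩
  · intro h n _
    obtain ⟨fn, hfn, htrans⟩ := h n
    exact ⟨fn, fun x => (hfn x).symm, htrans.bijective, htrans⟩

end Ergodic

section Digits

/-- The vector of the `n` lowest binary digits of a 2-adic integer. -/
noncomputable def digits (n : ℕ) (x : ℤ_[2]) : Fin n → ZMod 2 :=
  fun j => digit j x

lemma digitZ_toZModPow {j n : ℕ} (hj : j < n) (x : ℤ_[2]) :
    digitZ j (PadicInt.toZModPow n x) = digit j x := by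
  rw [digit, ← PadicInt.cast_toZModPow (j + 1) n hj x, ← ZMod.natCast_val, ZMod.val_natCast,
    pow_succ, Nat.mod_mul_right_div_self, Nat.mod_mod, digitZ]

lemma digitZ_injective (n : ℕ) :
    Injective fun (a : ZMod (2 ^ n)) (j : Fin n) => digitZ j a := by
  intro a b h
  refine ZMod.val_injective _ (Nat.eq_of_testBit_eq fun i => ?_)
  rcases lt_or_ge i n with hi | hi
  · have hdigit : digitZ i a = digitZ i b := congrFun h ⟨i, hi⟩
    rw [digitZ, digitZ, ZMod.natCast_eq_natCast_iff', Nat.mod_mod, Nat.mod_mod] at hdigit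
    rw [Nat.testBit_eq_decide_div_mod_eq, Nat.testBit_eq_decide_div_mod_eq, hdigit]
  · have hpow : 2 ^ n ≤ 2 ^ i := Nat.pow_le_pow_right two_pos hi
    rw [Nat.testBit_lt_two_pow (a.val_lt.trans_le hpow),
      Nat.testBit_lt_two_pow (b.val_lt.trans_le hpow)]

/-- Binary expansion identifies residues modulo `2 ^ n` with vectors of `n` binary digits. -/
noncomputable def digitsEquiv (n : ℕ) : ZMod (2 ^ n) ≃ (Fin n → ZMod 2) :=
  Equiv.ofBijective _ <| (Fintype.bijective_iff_injective_and_card _).2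
    ⟨digitZ_injective n, by simp⟩

lemma digitsEquiv_comp_toZModPow (n : ℕ) :
    digitsEquiv n ∘ PadicInt.toZModPow n = digits n :=
  funext fun x => funext fun j => digitZ_toZModPow j.isLt x

lemma digits_surjective (n : ℕ) : Surjective (digits n) := by
  rw [← digitsEquiv_comp_toZModPow]
  exact (digitsEquiv n).surjective.comp (ZMod.ringHom_surjective _)

lemma snocEquiv_symm_comp_digits (n : ℕ) :
    (Fin.snocEquiv fun _ => ZMod 2).symm.trans (Equiv.prodComm _ _) ∘ digits (n + 1) =
      fun x => (digits n x, digit n x) :=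
  rfl

lemma digits_prodMk_digit_surjective (n : ℕ) : Surjective fun x => (digits n x, digit n x) := by
  rw [← snocEquiv_symm_comp_digits]
  exact (Equiv.surjective _).comp (digits_surjective (n + 1))

variable {T : ℤ_[2] → ℤ_[2]}

lemma ergodic_iff_forall_hasTransitiveFactor_digits :
    Ergodic 2 T ↔ ∀ n, HasTransitiveFactor (digits n) T := by
  simp only [ergodic_iff_forall_hasTransitiveFactor, ← digitsEquiv_comp_toZModPow,
    hasTransitiveFactor_equiv_comp_iff]

lemma hasTransitiveFactor_digits_succ_iff {n : ℕ} (h : HasTransitiveFactor (digits n) T) :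
    HasTransitiveFactor (digits (n + 1)) T ↔
      ∃ φ : (Fin n → ZMod 2) → ZMod 2, Odd (Finset.univ.filter fun v => φ v = 1).card ∧
        ∀ x, digit n (T x) = digit n x + φ (digits n x) := by
  rw [← hasTransitiveFactor_prodMk_iff (digits_prodMk_digit_surjective n) h,
    ← snocEquiv_symm_comp_digits, hasTransitiveFactor_equiv_comp_iff]

end Digits

end Paper

/-- `T : ℤ₂ → ℤ₂` is compatible and ergodic iff for every `i`
there is a Boolean function `φ_i` of `i` variables of odd weight such that
`δ_i (T x) = δ_i x + φ_i (δ₀ x, …, δ_{i-1} x)` for all `x`. -/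
theorem statement5 (T : ℤ_[2] → ℤ_[2]) :
    (Paper.Compatible 2 T ∧ Paper.Ergodic 2 T) ↔
      ∀ i : ℕ, ∃ φ : (Fin i → ZMod 2) → ZMod 2,
        Odd ((Finset.univ.filter (fun v : Fin i → ZMod 2 => φ v = 1)).card) ∧
        ∀ x : ℤ_[2],
          Paper.digit i (T x) = Paper.digit i x + φ (fun j => Paper.digit j.val x) := by
  rw [and_iff_right_of_imp Paper.Ergodic.compatible,
    Paper.ergodic_iff_forall_hasTransitiveFactor_digits]
  constructor
  · intro h i
    exact (Paper.hasTransitiveFactor_digits_succ_iff (h i)).1 (h (i + 1))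
  · intro h n
    induction n with
    | zero => exact Paper.hasTransitiveFactor_of_subsingleton
    | succ n ih => exact (Paper.hasTransitiveFactor_digits_succ_iff ih).2 (h n)
end

section
/- For every n ≥ 1, the number of maps f : ℤ/2^n → ℤ/2^n that are compatible (for every r ≤ n and all x, y ∈ ℤ/2^n, x ≡ y (mod 2^r) implies f(x) ≡ f(y) (mod 2^r)) and transitive (f is a permutation of ℤ/2^n consisting of a single cycle of length 2^n) is exactly 2^{2^n − n − 1}. -/
/-!
Reducing modulo `2 ^ n` and splitting off the top binary digit identifies a compatible permutation
of `ℤ/2^(n+1)` with a skew product `(a, b) ↦ (g a, h a + b)` of a compatible map `g` of `ℤ/2^n` by a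
function `h` to `ℤ/2`, because every permutation of `ℤ/2` is a translation. Going once around the
cycle of a transitive `g` translates the top digit by `∑ h`, so the skew product is transitive iff
`g` is transitive and `∑ h = 1`. This holds for `2 ^ (2 ^ n - 1)` of the functions `h`, hence the
count is multiplied by that factor when `n` increases by one.
-/

open Function

/-- A self-map is transitive if the forward orbit of every point is the whole space; on a finite
type, this says that it is a permutation with a single cycle. -/
def IsTransitive {α : Type*} (f : α → α) : Prop :=
  ∀ a b, ∃ k : ℕ, f^[k] a = b

namespace IsTransitive

variable {α β : Type*} {f : α → α}

theorem surjective (hf : IsTransitive f) : Surjective f := fun b ↦ by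
  obtain ⟨k, hk⟩ := hf (f b) b
  exact ⟨f^[k] b, by rw [← iterate_succ_apply' f, iterate_succ_apply, hk]⟩

theorem bijective [Finite α] (hf : IsTransitive f) : Bijective f :=
  hf.surjective.bijective_of_finite

theorem of_semiconj {g : β → β} {π : α → β} (hf : IsTransitive f) (hπ : Surjective π)
    (h : Semiconj π f g) : IsTransitive g := by
  intro a b
  obtain ⟨x, rfl⟩ := hπ a
  obtain ⟨y, rfl⟩ := hπ b
  obtain ⟨k, rfl⟩ := hf x y
  exact ⟨k, (h.iterate_right k x).symm⟩

theorem minimalPeriod_pos (hf : IsTransitive f) (x : α) : 0 < minimalPeriod f x := by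
  obtain ⟨k, hk⟩ := hf (f x) x
  exact IsPeriodicPt.minimalPeriod_pos k.succ_pos hk

theorem sum_range_minimalPeriod [Fintype α] {M : Type*} [AddCommMonoid M] (hf : IsTransitive f)
    (h : α → M) (x : α) : ∑ i ∈ Finset.range (minimalPeriod f x), h (f^[i] x) = ∑ a, h a := by
  refine Finset.sum_nbij (f^[·] x) (by simp) ?_ ?_ (by simp)
  · intro i hi j hj hij
    exact iterate_injOn_Iio_minimalPeriod (by simpa using hi) (by simpa using hj) hij
  · intro a _
    obtain ⟨k, rfl⟩ := hf x a
    exact ⟨k % minimalPeriod f x, by simpa using Nat.mod_lt _ (hf.minimalPeriod_pos x),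
      iterate_mod_minimalPeriod_eq⟩

end IsTransitive

theorem isTransitive_conj_iff {α β : Type*} (e : α ≃ β) {f : α → α} :
    IsTransitive (e.conj f) ↔ IsTransitive f :=
  ⟨fun h ↦ h.of_semiconj e.symm.surjective fun y ↦ by simp [Equiv.conj_apply],
    fun h ↦ h.of_semiconj e.surjective (e.semiconj_conj f)⟩

theorem isTransitive_add_left_zmod_two_iff {s : ZMod 2} : IsTransitive (s + ·) ↔ s = 1 := by
  simp only [IsTransitive, add_left_iterate]
  constructor
  · intro hs
    obtain ⟨k, hk⟩ := hs 0 1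
    obtain rfl | rfl := (by decide : ∀ t : ZMod 2, t = 0 ∨ t = 1) s
    · rwa [smul_zero, add_zero] at hk
    · rfl
  · rintro rfl a b
    exact ⟨(b - a).val, by simp⟩

/-- The skew product of a self-map `g` of the base `α` by a cocycle `h` with values in the
fibre `A`: it acts on the base by `g` and translates the fibre over `a` by `h a`. -/
def skewProduct {α A : Type*} [Add A] (g : α → α) (h : α → A) (x : α × A) : α × A :=
  (g x.1, h x.1 + x.2)

section SkewProduct

variable {α A : Type*}

theorem skewProduct_inj [AddZeroClass A] {g g' : α → α} {h h' : α → A} :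
    skewProduct g h = skewProduct g' h' ↔ g = g' ∧ h = h' := by
  refine ⟨fun H ↦ ?_, by rintro ⟨rfl, rfl⟩; rfl⟩
  have H₀ (a : α) : g a = g' a ∧ h a = h' a := by
    simpa [skewProduct] using congrFun H (a, 0)
  exact ⟨funext fun a ↦ (H₀ a).1, funext fun a ↦ (H₀ a).2⟩

theorem semiconj_fst_skewProduct [Add A] (g : α → α) (h : α → A) :
    Semiconj Prod.fst (skewProduct g h) g :=
  fun _ ↦ rfl

variable [AddCommMonoid A] {g : α → α} {h : α → A}

theorem skewProduct_iterate_apply (k : ℕ) (x : α) (b : A) :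
    (skewProduct g h)^[k] (x, b) = (g^[k] x, ∑ i ∈ Finset.range k, h (g^[i] x) + b) := by
  induction k with
  | zero => simp
  | succ k ih =>
    rw [iterate_succ_apply', ih, iterate_succ_apply', Finset.sum_range_succ_comm, add_assoc]
    rfl

theorem semiconj_mk_skewProduct_iterate_minimalPeriod [Fintype α] (hg : IsTransitive g) (x : α) :
    Semiconj (Prod.mk x) (∑ a, h a + ·) (skewProduct g h)^[minimalPeriod g x] := by
  intro b
  rw [skewProduct_iterate_apply, iterate_minimalPeriod, hg.sum_range_minimalPeriod]

theorem skewProduct_iterate_minimalPeriod_mul [Fintype α] (hg : IsTransitive g) (x : α) (b : A)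
    (j : ℕ) :
    (skewProduct g h)^[minimalPeriod g x * j] (x, b) = (x, (∑ a, h a + ·)^[j] b) := by
  rw [iterate_mul]
  exact ((semiconj_mk_skewProduct_iterate_minimalPeriod hg x).iterate_right j b).symm

theorem isTransitive_skewProduct_iff [Fintype α] [Nonempty α] :
    IsTransitive (skewProduct g h) ↔ IsTransitive g ∧ IsTransitive (∑ a, h a + ·) := by
  constructor
  · intro H
    have hg : IsTransitive g := H.of_semiconj Prod.fst_surjective (semiconj_fst_skewProduct g h)
    refine ⟨hg, fun b c ↦ ?_⟩
    obtain ⟨x⟩ := ‹Nonempty α›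
    obtain ⟨k, hk⟩ := H (x, b) (x, c)
    have hx : IsPeriodicPt g k x := by
      have hfst := (semiconj_fst_skewProduct g h).iterate_right k (x, b)
      rw [hk] at hfst
      exact hfst.symm
    obtain ⟨j, rfl⟩ := hx.minimalPeriod_dvd
    rw [skewProduct_iterate_minimalPeriod_mul hg] at hk
    exact ⟨j, congrArg Prod.snd hk⟩
  · rintro ⟨hg, hs⟩ ⟨x, b⟩ ⟨y, c⟩
    obtain ⟨k, rfl⟩ := hg x y
    obtain ⟨j, rfl⟩ := hs (∑ i ∈ Finset.range k, h (g^[i] x) + b) c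
    refine ⟨minimalPeriod g (g^[k] x) * j + k, ?_⟩
    rw [iterate_add_apply, skewProduct_iterate_apply k, skewProduct_iterate_minimalPeriod_mul hg]

end SkewProduct

theorem zmod_two_apply_eq_of_injective {φ : ZMod 2 → ZMod 2} (hφ : Injective φ)
    (b : ZMod 2) : φ b = φ 0 + b := by
  decide +revert

theorem exists_skewProduct_eq {α : Type*} {F : α × ZMod 2 → α × ZMod 2} (hF : Injective F)
    (hfst : ∀ a b, (F (a, b)).1 = (F (a, 0)).1) : ∃ g h, skewProduct g h = F := by
  refine ⟨fun a ↦ (F (a, 0)).1, fun a ↦ (F (a, 0)).2, funext fun ⟨a, b⟩ ↦ ?_⟩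
  have hfibre : Injective fun b ↦ (F (a, b)).2 := fun b c hbc ↦
    congrArg Prod.snd (hF (Prod.ext ((hfst a b).trans (hfst a c).symm) hbc))
  exact Prod.ext (hfst a b).symm (zmod_two_apply_eq_of_injective hfibre b).symm

theorem card_subtype_sum_eq {α A : Type*} [Fintype α] [Nonempty α] [AddCommGroup A] (s : A) :
    Nat.card {h : α → A // ∑ a, h a = s} = Nat.card A ^ (Fintype.card α - 1) := by
  classical
  obtain ⟨a⟩ := ‹Nonempty α›
  have hsum (h : α → A) : ∑ x, h x = h a + ∑ x : {x // x ≠ a}, h x :=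
    Fintype.sum_eq_add_sum_subtype_ne h a
  have hbij : Bijective fun (h : {h : α → A // ∑ x, h x = s}) (x : {x // x ≠ a}) ↦ h.1 x := by
    constructor
    · rintro ⟨h, rfl⟩ ⟨h', hh'⟩ hne
      refine Subtype.ext ((Equiv.funSplitAt a A).injective (Prod.ext ?_ hne))
      have hrest : ∑ x : {x // x ≠ a}, h x = ∑ x : {x // x ≠ a}, h' x :=
        Fintype.sum_congr _ _ (congrFun hne)
      rw [hsum h, hsum h', hrest] at hh'
      exact (add_right_cancel hh').symm
    · intro k
      obtain ⟨h, hh⟩ := (Equiv.funSplitAt a A).surjective (s - ∑ x, k x, k)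
      obtain ⟨ha, rfl⟩ := Prod.ext_iff.1 hh
      refine ⟨⟨h, ?_⟩, rfl⟩
      rw [hsum, ← eq_sub_iff_add_eq]
      exact ha
  rw [Nat.card_eq_of_bijective _ hbij, Nat.card_fun, Nat.card_eq_fintype_card (α := {x // x ≠ a}),
    Fintype.card_subtype_compl, Fintype.card_subtype_eq]

/-- Compatibility of a self-map of `ℤ/p^n`: for every `r ≤ n`, it preserves congruence of canonical
representatives modulo `p ^ r`. -/
def IsCompatible (p n : ℕ) (f : ZMod (p ^ n) → ZMod (p ^ n)) : Prop :=
  ∀ r ≤ n, ∀ x y : ZMod (p ^ n),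
    x.val % p ^ r = y.val % p ^ r → (f x).val % p ^ r = (f y).val % p ^ r

section TopDigit

variable {p n : ℕ} [NeZero p]

variable (p n) in
/-- Splits `x : ℤ/p^(n+1)` into its residue modulo `p ^ n` and its top base-`p` digit, read off the
canonical representative. -/
noncomputable def splitTopDigit : ZMod (p ^ (n + 1)) ≃ ZMod (p ^ n) × ZMod p :=
  Equiv.ofBijective (fun x ↦ ((x.val : ZMod (p ^ n)), ((x.val / p ^ n : ℕ) : ZMod p))) <| by
    rw [Fintype.bijective_iff_injective_and_card]
    refine ⟨fun x y hxy ↦ ?_, by simp [ZMod.card, pow_succ]⟩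
    have hdigit (z : ZMod (p ^ (n + 1))) : z.val / p ^ n < p :=
      Nat.div_lt_of_lt_mul (pow_succ p n ▸ z.val_lt)
    obtain ⟨hmod, hdiv⟩ := Prod.ext_iff.1 hxy
    simp only [ZMod.natCast_eq_natCast_iff', Nat.mod_eq_of_lt (hdigit _)] at hmod hdiv
    exact ZMod.val_injective _ (Nat.ext_div_mod hdiv hmod)

theorem val_fst_splitTopDigit_mod {r : ℕ} (hr : r ≤ n) (x : ZMod (p ^ (n + 1))) :
    (splitTopDigit p n x).1.val % p ^ r = x.val % p ^ r := by
  simp only [splitTopDigit, Equiv.ofBijective_apply, ZMod.val_natCast]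
  exact Nat.mod_mod_of_dvd _ (pow_dvd_pow p hr)

theorem val_splitTopDigit_symm_mod {r : ℕ} (hr : r ≤ n) (x : ZMod (p ^ n) × ZMod p) :
    ((splitTopDigit p n).symm x).val % p ^ r = x.1.val % p ^ r := by
  rw [← val_fst_splitTopDigit_mod hr, Equiv.apply_symm_apply]

theorem fst_splitTopDigit_eq_iff {x y : ZMod (p ^ (n + 1))} :
    (splitTopDigit p n x).1 = (splitTopDigit p n y).1 ↔ x.val % p ^ n = y.val % p ^ n := by
  rw [← val_fst_splitTopDigit_mod le_rfl, ← val_fst_splitTopDigit_mod le_rfl,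
    Nat.mod_eq_of_lt (ZMod.val_lt _), Nat.mod_eq_of_lt (ZMod.val_lt _),
    (ZMod.val_injective _).eq_iff]

theorem IsCompatible.fst_conj_splitTopDigit_eq {f : ZMod (p ^ (n + 1)) → ZMod (p ^ (n + 1))}
    (hf : IsCompatible p (n + 1) f) (a : ZMod (p ^ n)) (b c : ZMod p) :
    ((splitTopDigit p n).conj f (a, b)).1 = ((splitTopDigit p n).conj f (a, c)).1 := by
  simp only [Equiv.conj_apply, fst_splitTopDigit_eq_iff]
  exact hf n n.le_succ _ _ (by simp only [val_splitTopDigit_symm_mod le_rfl])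

theorem isCompatible_conj_skewProduct_iff {g : ZMod (p ^ n) → ZMod (p ^ n)}
    {h : ZMod (p ^ n) → ZMod p} :
    IsCompatible p (n + 1) ((splitTopDigit p n).symm.conj (skewProduct g h)) ↔
      IsCompatible p n g := by
  constructor
  · intro hc r hr x y hxy
    simpa [Equiv.conj_apply, val_splitTopDigit_symm_mod hr, skewProduct] using
      hc r (by lia) ((splitTopDigit p n).symm (x, 0)) ((splitTopDigit p n).symm (y, 0))
        (by simpa only [val_splitTopDigit_symm_mod hr] using hxy)
  · intro hc r hr x y hxy
    obtain hr | rfl := Nat.le_succ_iff.1 hr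
    · simp only [Equiv.conj_apply, Equiv.symm_symm, val_splitTopDigit_symm_mod hr]
      exact hc r hr _ _ (by simpa only [val_fst_splitTopDigit_mod hr] using hxy)
    · rw [Nat.mod_eq_of_lt x.val_lt, Nat.mod_eq_of_lt y.val_lt] at hxy
      rw [ZMod.val_injective _ hxy]

end TopDigit

theorem isCompatible_and_isTransitive_conj_skewProduct_iff {n : ℕ}
    {g : ZMod (2 ^ n) → ZMod (2 ^ n)} {h : ZMod (2 ^ n) → ZMod 2} :
    IsCompatible 2 (n + 1) ((splitTopDigit 2 n).symm.conj (skewProduct g h)) ∧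
        IsTransitive ((splitTopDigit 2 n).symm.conj (skewProduct g h)) ↔
      (IsCompatible 2 n g ∧ IsTransitive g) ∧ ∑ a, h a = 1 := by
  rw [isCompatible_conj_skewProduct_iff, isTransitive_conj_iff, isTransitive_skewProduct_iff,
    isTransitive_add_left_zmod_two_iff, and_assoc]

theorem IsCompatible.exists_conj_skewProduct_eq {n : ℕ}
    {f : ZMod (2 ^ (n + 1)) → ZMod (2 ^ (n + 1))} (hf : IsCompatible 2 (n + 1) f)
    (hinj : Injective f) : ∃ g h, (splitTopDigit 2 n).symm.conj (skewProduct g h) = f := by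
  obtain ⟨g, h, hgh⟩ := exists_skewProduct_eq (F := (splitTopDigit 2 n).conj f)
    (((splitTopDigit 2 n).injective.comp hinj).comp (splitTopDigit 2 n).symm.injective)
    (hf.fst_conj_splitTopDigit_eq · · 0)
  exact ⟨g, h, by rw [hgh, ← Equiv.conj_symm, Equiv.symm_apply_apply]⟩

theorem card_isCompatible_isTransitive_zero (p : ℕ) :
    Nat.card {f // IsCompatible p 0 f ∧ IsTransitive f} = 1 := by
  have : Subsingleton (ZMod (p ^ 0)) := inferInstanceAs (Subsingleton (Fin 1))
  have : Nonempty {f // IsCompatible p 0 f ∧ IsTransitive f} :=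
    ⟨id, fun _ _ _ _ h ↦ h, fun _ _ ↦ ⟨0, Subsingleton.elim _ _⟩⟩
  exact Nat.card_unique

theorem card_isCompatible_isTransitive_succ (n : ℕ) :
    Nat.card {f // IsCompatible 2 (n + 1) f ∧ IsTransitive f} =
      Nat.card {f // IsCompatible 2 n f ∧ IsTransitive f} * 2 ^ (2 ^ n - 1) := by
  have card_cocycles : Nat.card {h : ZMod (2 ^ n) → ZMod 2 // ∑ a, h a = 1} = 2 ^ (2 ^ n - 1) := by
    rw [card_subtype_sum_eq, Nat.card_zmod, ZMod.card]
  rw [← card_cocycles, ← Nat.card_prod]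
  let toSkew (x : {f // IsCompatible 2 n f ∧ IsTransitive f} ×
      {h : ZMod (2 ^ n) → ZMod 2 // ∑ a, h a = 1}) :
      {f // IsCompatible 2 (n + 1) f ∧ IsTransitive f} :=
    ⟨(splitTopDigit 2 n).symm.conj (skewProduct x.1.1 x.2.1),
      isCompatible_and_isTransitive_conj_skewProduct_iff.2 ⟨x.1.2, x.2.2⟩⟩
  refine (Nat.card_eq_of_bijective toSkew ⟨fun x y hxy ↦ ?_, fun ⟨f, hf⟩ ↦ ?_⟩).symm
  · have hskew := (splitTopDigit 2 n).symm.conj.injective (congrArg Subtype.val hxy)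
    obtain ⟨hg, hh⟩ := skewProduct_inj.1 hskew
    exact Prod.ext (Subtype.ext hg) (Subtype.ext hh)
  · obtain ⟨g, h, rfl⟩ := hf.1.exists_conj_skewProduct_eq hf.2.bijective.injective
    obtain ⟨hg, hh⟩ := isCompatible_and_isTransitive_conj_skewProduct_iff.1 hf
    exact ⟨(⟨g, hg⟩, ⟨h, hh⟩), rfl⟩

/-- for `n ≥ 1` there are exactly `2^(2^n − n − 1)` maps of `ℤ/2^n` to itself
that are compatible and transitive (a permutation consisting of a single cycle of
length `2^n`). -/
theorem statement6 (n : ℕ) (hn : 1 ≤ n) :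
    Nat.card {f : ZMod (2 ^ n) → ZMod (2 ^ n) //
      (∀ r ≤ n, ∀ x y : ZMod (2 ^ n),
        x.val % 2 ^ r = y.val % 2 ^ r → (f x).val % 2 ^ r = (f y).val % 2 ^ r) ∧
      Function.Bijective f ∧
      ∀ a b : ZMod (2 ^ n), ∃ k : ℕ, f^[k] a = b} = 2 ^ (2 ^ n - n - 1) := by
  clear hn
  calc
    _ = Nat.card {f // IsCompatible 2 n f ∧ IsTransitive f} :=
      Nat.card_congr <| Equiv.subtypeEquivRight fun _ ↦
        ⟨fun ⟨hc, _, ht⟩ ↦ ⟨hc, ht⟩, fun ⟨hc, ht⟩ ↦ ⟨hc, IsTransitive.bijective ht, ht⟩⟩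
    _ = 2 ^ (2 ^ n - n - 1) := by
      induction n with
      | zero => exact card_isCompatible_isTransitive_zero 2
      | succ n ih =>
        have hlt : n < 2 ^ n := n.lt_two_pow_self
        rw [card_isCompatible_isTransitive_succ, ih, ← pow_add, pow_succ 2 n]
        congr 1
        lia
end

section
/- Let m > 1 be odd, and let C₀,…,C_{m−1} be natural numbers with δ₀(C_j) = 1 and δ₂(C_j) = 1 for all j. Let c₀,…,c_{m−1} be natural numbers such that Σ_{j=0}^{m−1} c_j ≡ 0 (mod 2) and the sequence (c_{i mod m} mod 2)_{i≥0} is purely periodic with shortest period length m. Then for every x₀ ∈ ℕ the sequence defined by x_{i+1} = x_i + c_{i mod m} + (x_i² OR C_{i mod m}) satisfies: for every k ≥ 1, the sequence (x_i mod 2^k)_{i≥0} is purely periodic, its shortest period has length 2^k·m, and every element of ℤ/2^k occurs exactly m times among x₀ mod 2^k, …, x_{2^k·m−1} mod 2^k. -/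
/-! By induction on `k`, for every `i` the sequence `t ↦ x (i + m * t)` induces a permutation of
`ℤ/2 ^ k`. In `2 ^ k * m` steps each of the `m` maps is therefore applied to every residue modulo
`2 ^ k` exactly once. Modulo `2 ^ (k + 1)`, `z ^ 2 OR C j` depends only on `z` modulo `2 ^ k` and
sums to `2 ^ k` over these residues, so those steps advance `x` by
`2 ^ k * (m + ∑ c j) ≡ 2 ^ k`. Thus the new digit flips, which is the claim for `k + 1`. Hence a
period of `x` modulo `2 ^ k` that is a multiple of `m` is one of `2 ^ k * m`; and every period is a
multiple of `m`, because `x (i + 1) - x i` has the parity of `c (i mod m) + 1`.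

The sum of `z ^ 2 OR C` reduces to the claim that bit `b ≥ 1` of `z ^ 2 OR C` is set for an even
number of `z < 2 ^ b`. For `z ^ 2` alone this fails only at `b = 2`, and there the bit of `C` is
set. -/

namespace Paper

open Finset Function

section Sums

variable {M : Type*} [AddCommMonoid M]

lemma sum_range_mul (f : ℕ → M) (n m : ℕ) :
    ∑ s ∈ range (n * m), f s = ∑ j ∈ range m, ∑ t ∈ range n, f (j + m * t) := by
  rw [sum_comm]
  induction n with
  | zero => simp
  | succ n ih =>
    rw [Nat.succ_mul, sum_range_add, ih, sum_range_succ, mul_comm n m]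
    simp only [add_comm]

lemma sum_range_add_left_of_periodic {f : ℕ → M} {m : ℕ} (hf : Periodic f m) (i : ℕ) :
    ∑ j ∈ range m, f (i + j) = ∑ j ∈ range m, f j := by
  calc ∑ j ∈ range m, f (i + j)
    _ = ∑ s ∈ Ico i (i + m), f s := by rw [sum_Ico_eq_sum_range, Nat.add_sub_cancel_left]
    _ = ∑ s ∈ Ico i (i + m), f (s % m) := by simp only [hf.map_mod_nat]
    _ = ∑ j ∈ (Ico i (i + m)).image (· % m), f j := (sum_image (Nat.mod_injOn_Ico i m)).symm
    _ = ∑ j ∈ range m, f j := by rw [Nat.image_Ico_mod]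

end Sums

section ShortestPeriod

variable {α β : Type*} {s : ℕ → α} {m t : ℕ}

lemma ShortestPeriod.dvd_of_purePeriodic (hs : ShortestPeriod s m) (ht : PurePeriodic s t) :
    m ∣ t := by
  have hmod : PurePeriodic s (t % m) := fun i ↦ by
    have hm : s (i + t % m + t / m * m) = s (i + t % m) := Periodic.nat_mul hs.2.1 (t / m) _
    rw [← hm, add_assoc, Nat.mod_add_div', ht]
  by_contra hdvd
  have hle := hs.2.2 (t % m) (Nat.emod_pos_of_not_dvd hdvd) hmod
  exact (Nat.mod_lt t hs.1).not_ge hle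

lemma shortestPeriod_congr {s' : ℕ → β} (h : ∀ i j, s i = s j ↔ s' i = s' j) :
    ShortestPeriod s m ↔ ShortestPeriod s' m := by
  simp only [ShortestPeriod, PurePeriodic, h]

end ShortestPeriod

/-- The sequence `u` induces an injective, hence for `n ≠ 0` bijective, self-map of `ℤ/n`. -/
def InducesPermMod (n : ℕ) (u : ℕ → ℕ) : Prop :=
  ∀ s t, u s ≡ u t [MOD n] ↔ s ≡ t [MOD n]

namespace InducesPermMod

variable {n : ℕ} {u : ℕ → ℕ}

lemma bijOn_range (hu : InducesPermMod n u) :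
    Set.BijOn (fun t ↦ u t % n) (range n) (range n) := by
  have hmaps : Set.MapsTo (fun t ↦ u t % n) (range n) (range n) := fun t ht ↦
    mem_coe.2 (mem_range.2 (Nat.mod_lt _ (Nat.zero_lt_of_lt (mem_range.1 ht))))
  have hinj : Set.InjOn (fun t ↦ u t % n) (range n) := fun s hs t ht hst ↦
    ((hu s t).1 hst).eq_of_lt_of_lt (mem_range.1 hs) (mem_range.1 ht)
  exact ⟨hmaps, hinj, surjOn_of_injOn_of_card_le _ hmaps hinj le_rfl⟩

lemma sum_range_mod {M : Type*} [AddCommMonoid M] (hu : InducesPermMod n u) (f : ℕ → M) :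
    ∑ t ∈ range n, f (u t % n) = ∑ z ∈ range n, f z :=
  sum_nbij (fun t ↦ u t % n) hu.bijOn_range.mapsTo hu.bijOn_range.injOn hu.bijOn_range.surjOn
    fun _ _ ↦ rfl

lemma sum_range_modEq (hu : InducesPermMod n u) {N : ℕ} {f : ℕ → ℕ}
    (hf : ∀ {a b}, a ≡ b [MOD n] → f a ≡ f b [MOD N]) :
    ∑ t ∈ range n, f (u t) ≡ ∑ z ∈ range n, f z [MOD N] := by
  rw [← hu.sum_range_mod f]
  exact .sum fun t _ ↦ hf (Nat.mod_modEq _ _).symm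

lemma card_filter_natCast_eq [NeZero n] (hu : InducesPermMod n u) (a : ZMod n) :
    #{t ∈ range n | (u t : ZMod n) = a} = 1 := by
  have hcast : ∀ z ∈ range n, (z : ZMod n) = a ↔ z = a.val := fun z hz ↦ by
    rw [← (ZMod.val_injective n).eq_iff, ZMod.val_cast_of_lt (mem_range.1 hz)]
  calc #{t ∈ range n | (u t : ZMod n) = a}
    _ = ∑ t ∈ range n, if ((u t % n : ℕ) : ZMod n) = a then 1 else 0 := by
      simp only [card_filter, ZMod.natCast_mod]
    _ = ∑ z ∈ range n, if (z : ZMod n) = a then 1 else 0 :=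
      hu.sum_range_mod fun z ↦ if (z : ZMod n) = a then 1 else 0
    _ = #{z ∈ range n | z = a.val} := by rw [← card_filter, filter_congr hcast]
    _ = 1 := by simp [filter_eq', ZMod.val_lt]

end InducesPermMod

/-- Increments `g i`, depending on the time `i` with period `m`, for which the recursion
`x (i + 1) = x i + g i (x i)` carries in base `b` like an odometer: the first `k + 1` digits of
`g i z` depend only on the first `k` digits of `z`, and the increments over one period of times and
one residue system modulo `b ^ k` add up to `b ^ k` modulo `b ^ (k + 1)`. -/
structure IsOdometerFamily (b m : ℕ) (g : ℕ → ℕ → ℕ) : Prop where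
  periodic : Periodic g m
  modEq : ∀ (i k : ℕ) {u v : ℕ}, u ≡ v [MOD b ^ k] → g i u ≡ g i v [MOD b ^ (k + 1)]
  sum_modEq : ∀ k, ∑ i ∈ range m, ∑ z ∈ range (b ^ k), g i z ≡ b ^ k [MOD b ^ (k + 1)]

lemma orbit_add {g : ℕ → ℕ → ℕ} {x : ℕ → ℕ} (hx : ∀ i, x (i + 1) = x i + g i (x i)) (i n : ℕ) :
    x (i + n) = x i + ∑ s ∈ range n, g (i + s) (x (i + s)) := by
  induction n with
  | zero => simp
  | succ n ih => rw [sum_range_succ, ← add_assoc, ← add_assoc, hx, ih]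

namespace IsOdometerFamily

variable {b m : ℕ} {g : ℕ → ℕ → ℕ} {x : ℕ → ℕ}

lemma add_pow_mul_modEq (hg : IsOdometerFamily b m g) (hx : ∀ i, x (i + 1) = x i + g i (x i))
    {k : ℕ} (hperm : ∀ i, InducesPermMod (b ^ k) fun t ↦ x (i + m * t)) (i : ℕ) :
    x (i + b ^ k * m) ≡ x i + b ^ k [MOD b ^ (k + 1)] := by
  have hgper (j t : ℕ) : g (j + m * t) = g j := by
    simpa [mul_comm] using hg.periodic.nat_mul t j
  have hclass (j : ℕ) : ∑ t ∈ range (b ^ k), g j (x (j + m * t)) ≡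
      ∑ z ∈ range (b ^ k), g j z [MOD b ^ (k + 1)] :=
    (hperm j).sum_range_modEq (hg.modEq j k)
  have hsumper : Periodic (fun j ↦ ∑ z ∈ range (b ^ k), g j z) m := fun j ↦ by
    simp only [hg.periodic j]
  rw [orbit_add hx, sum_range_mul]
  refine .add_left _ ?_
  simp only [← add_assoc, hgper]
  calc ∑ j ∈ range m, ∑ t ∈ range (b ^ k), g (i + j) (x (i + j + m * t))
    _ ≡ ∑ j ∈ range m, ∑ z ∈ range (b ^ k), g (i + j) z [MOD b ^ (k + 1)] :=
      .sum fun j _ ↦ hclass (i + j)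
    _ = ∑ j ∈ range m, ∑ z ∈ range (b ^ k), g j z := sum_range_add_left_of_periodic hsumper i
    _ ≡ b ^ k [MOD b ^ (k + 1)] := hg.sum_modEq k

lemma add_mul_pow_mul_modEq (hg : IsOdometerFamily b m g)
    (hx : ∀ i, x (i + 1) = x i + g i (x i))
    {k : ℕ} (hperm : ∀ i, InducesPermMod (b ^ k) fun t ↦ x (i + m * t)) (i q : ℕ) :
    x (i + m * (b ^ k * q)) ≡ x i + b ^ k * q [MOD b ^ (k + 1)] := by
  induction q with
  | zero => simp [Nat.ModEq.refl]
  | succ q ih =>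
    calc x (i + m * (b ^ k * (q + 1)))
      _ = x (i + m * (b ^ k * q) + b ^ k * m) := by ring_nf
      _ ≡ x (i + m * (b ^ k * q)) + b ^ k [MOD b ^ (k + 1)] := hg.add_pow_mul_modEq hx hperm _
      _ ≡ x i + b ^ k * q + b ^ k [MOD b ^ (k + 1)] := ih.add_right _
      _ = x i + b ^ k * (q + 1) := by ring

lemma inducesPermMod (hg : IsOdometerFamily b m g) (hx : ∀ i, x (i + 1) = x i + g i (x i))
    (k i : ℕ) : InducesPermMod (b ^ k) fun t ↦ x (i + m * t) := by
  induction k generalizing i with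
  | zero => simp [InducesPermMod, Nat.modEq_one]
  | succ k ih =>
    intro s t
    wlog hst : s ≤ t generalizing s t
    · rw [Nat.ModEq.comm, this t s (by lia), Nat.ModEq.comm]
    have key (q : ℕ) : x (i + m * s) ≡ x (i + m * (s + b ^ k * q)) [MOD b ^ (k + 1)] ↔
        s ≡ s + b ^ k * q [MOD b ^ (k + 1)] := by
      have hadd := hg.add_mul_pow_mul_modEq hx ih (i + m * s) q
      rw [add_assoc, ← mul_add] at hadd
      rw [Nat.left_modEq_add_iff, ← Nat.left_modEq_add_iff (a := x (i + m * s))]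
      exact ⟨fun h ↦ h.trans hadd, fun h ↦ h.trans hadd.symm⟩
    have hlow : b ^ k ∣ b ^ (k + 1) := pow_dvd_pow b k.le_succ
    have hoffset (h : s ≡ t [MOD b ^ k]) : ∃ q, t = s + b ^ k * q := by
      obtain ⟨q, hq⟩ := (Nat.modEq_iff_dvd' hst).1 h
      exact ⟨q, by lia⟩
    constructor <;> intro h
    · obtain ⟨q, rfl⟩ := hoffset ((ih i s t).1 (h.of_dvd hlow))
      exact (key q).1 h
    · obtain ⟨q, rfl⟩ := hoffset (h.of_dvd hlow)
      exact (key q).2 h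

lemma card_filter_natCast_eq [NeZero b] (hg : IsOdometerFamily b m g)
    (hx : ∀ i, x (i + 1) = x i + g i (x i)) (k : ℕ) (a : ZMod (b ^ k)) :
    #{i ∈ range (b ^ k * m) | (x i : ZMod (b ^ k)) = a} = m := by
  have hclass (j : ℕ) : #{t ∈ range (b ^ k) | (x (j + m * t) : ZMod (b ^ k)) = a} = 1 :=
    (hg.inducesPermMod hx k j).card_filter_natCast_eq a
  rw [card_filter, sum_range_mul]
  simp only [← card_filter, hclass, sum_const, card_range, smul_eq_mul, mul_one]

lemma dvd_of_purePeriodic (hg : IsOdometerFamily b m g) (hx : ∀ i, x (i + 1) = x i + g i (x i))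
    (hg0 : ShortestPeriod (fun i ↦ g i 0 % b) m) {t : ℕ}
    (ht : PurePeriodic (fun i ↦ x i % b) t) : m ∣ t := by
  have hg0x (i : ℕ) : g i 0 ≡ g i (x i) [MOD b] := by
    simpa using hg.modEq i 0 (Nat.modEq_one (a := 0) (b := x i))
  refine hg0.dvd_of_purePeriodic fun i ↦ ?_
  have hsucc : x (i + t) + g (i + t) (x (i + t)) ≡ x i + g i (x i) [MOD b] := by
    rw [← hx, ← hx, add_right_comm]
    exact ht (i + 1)
  exact (hg0x _).trans ((Nat.ModEq.add_left_cancel (ht i) hsucc).trans (hg0x i).symm)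

theorem shortestPeriod [NeZero b] (hg : IsOdometerFamily b m g)
    (hx : ∀ i, x (i + 1) = x i + g i (x i))
    (hg0 : ShortestPeriod (fun i ↦ g i 0 % b) m) {k : ℕ} (hk : k ≠ 0) :
    ShortestPeriod (fun i ↦ (x i : ZMod (b ^ k))) (b ^ k * m) := by
  have hpos : 0 < b ^ k := pow_pos (NeZero.pos b) k
  have hperm := hg.inducesPermMod hx k
  refine ⟨Nat.mul_pos hpos hg0.1, fun i ↦ ?_, fun t ht hper ↦ Nat.le_of_dvd ht ?_⟩
  · have h : x (i + m * b ^ k) ≡ x (i + m * 0) [MOD b ^ k] := (hperm i _ _).2 (by simp [Nat.ModEq])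
    rw [mul_comm]
    exact (ZMod.natCast_eq_natCast_iff _ _ _).2 h
  · have hmod (i : ℕ) : x (i + t) ≡ x i [MOD b ^ k] :=
      (ZMod.natCast_eq_natCast_iff _ _ _).1 (hper i)
    obtain ⟨q, rfl⟩ := hg.dvd_of_purePeriodic hx hg0 fun i ↦ (hmod i).of_dvd (dvd_pow_self b hk)
    have hq : q ≡ 0 [MOD b ^ k] := (hperm 0 q 0).1 (by simpa using hmod 0)
    rw [mul_comm m]
    exact Nat.mul_dvd_mul_right (Nat.modEq_zero_iff_dvd.1 hq) m

end IsOdometerFamily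

lemma modEq_sq {n a b : ℕ} (hn : Even n) (h : a ≡ b [MOD n]) : a ^ 2 ≡ b ^ 2 [MOD 2 * n] := by
  rw [Nat.modEq_iff_dvd] at h ⊢
  have hsub : (2 : ℤ) ∣ b - a := (Int.natCast_dvd_natCast.2 hn.two_dvd).trans h
  have hadd : (2 : ℤ) ∣ b + a := by lia
  push_cast
  rw [sq_sub_sq]
  exact mul_dvd_mul hadd h

lemma modEq_or_right {k a b : ℕ} (h : a ≡ b [MOD 2 ^ k]) (C : ℕ) :
    (a ||| C) ≡ (b ||| C) [MOD 2 ^ k] := by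
  unfold Nat.ModEq at *
  rw [Nat.or_mod_two_pow, h, ← Nat.or_mod_two_pow]

lemma modEq_sq_or {C : ℕ} (hC : Odd C) {k a b : ℕ} (h : a ≡ b [MOD 2 ^ k]) :
    (a ^ 2 ||| C) ≡ (b ^ 2 ||| C) [MOD 2 ^ (k + 1)] := by
  rcases eq_or_ne k 0 with rfl | hk
  · have hodd (u : ℕ) : (u ||| C) % 2 = 1 := Nat.or_mod_two_eq_one.2 (.inr (Nat.odd_iff.1 hC))
    simp [Nat.ModEq, hodd]
  · have hsq := modEq_sq (even_two.pow_of_ne_zero hk) h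
    rw [← pow_succ'] at hsq
    exact modEq_or_right hsq C

lemma sum_range_two_mul_modEq {f : ℕ → ℕ} {n N : ℕ} (hf : ∀ z, f (n + z) ≡ f z [MOD N])
    (heven : Even (∑ z ∈ range (2 * n), f z / N)) :
    ∑ z ∈ range (2 * n), f z ≡ 2 * ∑ z ∈ range n, f z [MOD 2 * N] := by
  have hlow : ∑ z ∈ range (2 * n), f z % N = 2 * ∑ z ∈ range n, f z % N := by
    rw [two_mul n, sum_range_add, two_mul]
    exact congrArg _ (sum_congr rfl fun z _ ↦ hf z)
  have hhigh : N * ∑ z ∈ range (2 * n), f z / N ≡ 0 [MOD 2 * N] := by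
    rw [mul_comm 2]
    exact Nat.modEq_zero_iff_dvd.2 (mul_dvd_mul_left N heven.two_dvd)
  calc ∑ z ∈ range (2 * n), f z
    _ = 2 * ∑ z ∈ range n, f z % N + N * ∑ z ∈ range (2 * n), f z / N := by
      rw [← hlow, mul_sum, ← sum_add_distrib]
      simp only [Nat.mod_add_div]
    _ ≡ 2 * ∑ z ∈ range n, f z + 0 [MOD 2 * N] :=
      .add (.mul_left' 2 (.sum fun z _ ↦ Nat.mod_modEq _ _)) hhigh

lemma even_sum_range_id {n : ℕ} (hn : 4 ∣ n) : Even (∑ z ∈ range n, z) := by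
  obtain ⟨r, rfl⟩ := hn
  refine ⟨r * (4 * r - 1), ?_⟩
  have h := sum_range_id_mul_two (4 * r)
  lia

lemma even_sum_sq_div_two_pow {b : ℕ} (hb : b ≠ 2) : Even (∑ z ∈ range (2 ^ b), z ^ 2 / 2 ^ b) := by
  rcases lt_or_gt_of_ne hb with hlt | hgt
  · interval_cases b <;> decide
  obtain ⟨e, rfl⟩ : ∃ e, b = e + 3 := ⟨b - 3, by lia⟩
  have hshift (z : ℕ) : (2 ^ (e + 2) + z) ^ 2 / 2 ^ (e + 3) =
      z ^ 2 / 2 ^ (e + 3) + (z + 2 ^ (e + 1)) := by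
    rw [← Nat.add_mul_div_left _ _ (by positivity)]
    congr 1
    ring
  have hpair : ∑ z ∈ range (2 ^ (e + 3)), z ^ 2 / 2 ^ (e + 3) =
      2 * ∑ z ∈ range (2 ^ (e + 2)), z ^ 2 / 2 ^ (e + 3) + ∑ z ∈ range (2 ^ (e + 2)), z +
        2 ^ (e + 2) * 2 ^ (e + 1) := by
    rw [show range (2 ^ (e + 3)) = range (2 ^ (e + 2) + 2 ^ (e + 2)) by ring_nf, sum_range_add]
    simp only [hshift, sum_add_distrib, sum_const, card_range, smul_eq_mul]
    ring
  have hid : Even (∑ z ∈ range (2 ^ (e + 2)), z) :=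
    even_sum_range_id (pow_dvd_pow 2 (Nat.le_add_left 2 e))
  rw [hpair]
  exact ((even_two_mul _).add hid).add (.mul_left (even_two.pow_of_ne_zero (by simp)) _)

lemma even_sum_sq_or_div_two_pow {C : ℕ} (hC : Odd (C / 4)) {b : ℕ} (hb : b ≠ 0) :
    Even (∑ z ∈ range (2 ^ b), (z ^ 2 ||| C) / 2 ^ b) := by
  simp only [Nat.or_div_two_pow]
  rcases Nat.even_or_odd (C / 2 ^ b) with hCb | hCb
  · have hb2 : b ≠ 2 := by
      rintro rfl
      exact Nat.not_even_iff_odd.2 hC hCb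
    have hparity (u : ℕ) : Odd (u ||| C / 2 ^ b) ↔ Odd u := by
      simp [Nat.odd_iff, Nat.or_mod_two_eq_one, Nat.even_iff.1 hCb]
    simpa only [even_sum_iff_even_card_odd, hparity] using even_sum_sq_div_two_pow hb2
  · have hodd (u : ℕ) : Odd (u ||| C / 2 ^ b) := by
      simp [Nat.odd_iff, Nat.or_mod_two_eq_one, Nat.odd_iff.1 hCb]
    simpa [even_sum_iff_even_card_odd, hodd] using even_two.pow_of_ne_zero hb

lemma sum_sq_or_modEq {C : ℕ} (hC₀ : Odd C) (hC₂ : Odd (C / 4)) (k : ℕ) :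
    ∑ z ∈ range (2 ^ k), (z ^ 2 ||| C) ≡ 2 ^ k [MOD 2 ^ (k + 1)] := by
  induction k with
  | zero => simpa [Nat.ModEq] using Nat.odd_iff.1 hC₀
  | succ k ih =>
    have hperiod (z : ℕ) : ((2 ^ k + z) ^ 2 ||| C) ≡ (z ^ 2 ||| C) [MOD 2 ^ (k + 1)] :=
      modEq_sq_or hC₀ (by simp [Nat.ModEq])
    have heven : Even (∑ z ∈ range (2 * 2 ^ k), (z ^ 2 ||| C) / 2 ^ (k + 1)) := by
      rw [← pow_succ']
      exact even_sum_sq_or_div_two_pow hC₂ k.succ_ne_zero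
    rw [pow_succ' 2 k, pow_succ' 2 (k + 1)]
    exact (sum_range_two_mul_modEq hperiod heven).trans (ih.mul_left' 2)

/-- The increment `c (i mod m) + (z ^ 2 OR C (i mod m))` of the clock-controlled generator at time
`i` in state `z`. -/
def sqOrIncrement (m : ℕ) (C c : ℕ → ℕ) (i z : ℕ) : ℕ :=
  c (i % m) + (z ^ 2 ||| C (i % m))

lemma isOdometerFamily_sqOrIncrement {m : ℕ} {C c : ℕ → ℕ} (hm : 0 < m) (hC₀ : ∀ j < m, Odd (C j))
    (hC₂ : ∀ j < m, Odd (C j / 4)) (hodd : Odd (m + ∑ j ∈ range m, c j)) :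
    IsOdometerFamily 2 m (sqOrIncrement m C c) where
  periodic i := by
    ext z
    simp only [sqOrIncrement, Nat.add_mod_right]
  modEq i k u v h := (modEq_sq_or (hC₀ _ (Nat.mod_lt i hm)) h).add_left _
  sum_modEq k := by
    have hterm : ∀ j ∈ range m, ∑ z ∈ range (2 ^ k), sqOrIncrement m C c j z ≡
        2 ^ k * (1 + c j) [MOD 2 ^ (k + 1)] := fun j hj ↦ by
      have hj : j < m := mem_range.1 hj
      simp only [sqOrIncrement, Nat.mod_eq_of_lt hj, sum_add_distrib, sum_const, card_range,
        smul_eq_mul, mul_add, mul_one, add_comm (2 ^ k)]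
      exact (sum_sq_or_modEq (hC₀ j hj) (hC₂ j hj) k).add_left _
    calc ∑ j ∈ range m, ∑ z ∈ range (2 ^ k), sqOrIncrement m C c j z
      _ ≡ ∑ j ∈ range m, 2 ^ k * (1 + c j) [MOD 2 ^ (k + 1)] := .sum hterm
      _ = 2 ^ k * (m + ∑ j ∈ range m, c j) := by simp [← mul_sum, sum_add_distrib]
      _ ≡ 2 ^ k * 1 [MOD 2 ^ (k + 1)] := by
        rw [pow_succ]
        exact .mul_left' _ (Nat.odd_iff.1 hodd)
      _ = 2 ^ k := mul_one _

lemma shortestPeriod_sqOrIncrement_zero {m : ℕ} {C c : ℕ → ℕ} (hC : ∀ j < m, Odd (C j))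
    (hc : ShortestPeriod (fun i ↦ c (i % m) % 2) m) :
    ShortestPeriod (fun i ↦ sqOrIncrement m C c i 0 % 2) m := by
  refine (shortestPeriod_congr fun i j ↦ ?_).1 hc
  have hi := Nat.odd_iff.1 (hC _ (Nat.mod_lt i hc.1))
  have hj := Nat.odd_iff.1 (hC _ (Nat.mod_lt j hc.1))
  simp only [sqOrIncrement, ne_eq, two_ne_zero, not_false_eq_true, zero_pow, Nat.zero_or]
  lia

end Paper

theorem statement19_general (m : ℕ)
    (C : ℕ → ℕ) (hC : ∀ j < m, C j % 2 = 1 ∧ (C j / 4) % 2 = 1)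
    (c : ℕ → ℕ)
    (hodd : Odd (m + ∑ j ∈ Finset.range m, c j))
    (hcper : Paper.ShortestPeriod (fun i => c (i % m) % 2) m)
    (x : ℕ → ℕ)
    (hx : ∀ i, x (i + 1) = x i + c (i % m) + (x i ^ 2 ||| C (i % m))) :
    ∀ k : ℕ, 1 ≤ k →
      Paper.ShortestPeriod (fun i => (x i : ZMod (2 ^ k))) (2 ^ k * m) ∧
      ∀ a : ZMod (2 ^ k),
        ((Finset.range (2 ^ k * m)).filter (fun i => (x i : ZMod (2 ^ k)) = a)).card = m := by
  have hC₀ : ∀ j < m, Odd (C j) := fun j hj ↦ Nat.odd_iff.2 (hC j hj).1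
  have hC₂ : ∀ j < m, Odd (C j / 4) := fun j hj ↦ Nat.odd_iff.2 (hC j hj).2
  have hg : Paper.IsOdometerFamily 2 m (Paper.sqOrIncrement m C c) :=
    Paper.isOdometerFamily_sqOrIncrement hcper.1 hC₀ hC₂ hodd
  have hg0 : Paper.ShortestPeriod (fun i ↦ Paper.sqOrIncrement m C c i 0 % 2) m :=
    Paper.shortestPeriod_sqOrIncrement_zero hC₀ hcper
  have horbit (i : ℕ) : x (i + 1) = x i + Paper.sqOrIncrement m C c i (x i) := by
    rw [hx, add_assoc, Paper.sqOrIncrement]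
  intro k hk
  exact ⟨hg.shortestPeriod horbit hg0 (Nat.one_le_iff_ne_zero.1 hk),
    hg.card_filter_natCast_eq horbit k⟩

/-- for odd `m > 1`, constants `C j` with `δ₀(C j) = δ₂(C j) = 1`, and a
control sequence `c j` of even sum whose residues mod 2 have shortest period `m`, the
sequence `x (i+1) = x i + c (i % m) + (x i ² OR C (i % m))` is, modulo every `2^k`,
purely periodic with shortest period length `2^k·m`, every residue occurring exactly `m`
times per period. -/
theorem statement19 (m : ℕ) (hm : 1 < m) (hmodd : Odd m)
    (C : ℕ → ℕ) (hC : ∀ j < m, C j % 2 = 1 ∧ (C j / 4) % 2 = 1)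
    (c : ℕ → ℕ)
    (hsum : (∑ j ∈ Finset.range m, c j) % 2 = 0)
    (hcper : Paper.ShortestPeriod (fun i => c (i % m) % 2) m)
    (x : ℕ → ℕ)
    (hx : ∀ i, x (i + 1) = x i + c (i % m) + (x i ^ 2 ||| C (i % m))) :
    ∀ k : ℕ, 1 ≤ k →
      Paper.ShortestPeriod (fun i => (x i : ZMod (2 ^ k))) (2 ^ k * m) ∧
      ∀ a : ZMod (2 ^ k),
        ((Finset.range (2 ^ k * m)).filter (fun i => (x i : ZMod (2 ^ k)) = a)).card = m :=
  statement19_general m C hC c (hmodd.add_even (Nat.even_iff.2 hsum)) hcper x hx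
end
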